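/- arXiv:1509.01870 — 3 statements merged into one kernel-verified Lean document; each statement's English description precedes it below -/
import Mathlib

section
/- Let G be a discrete group and H ≤ G a subgroup. The following are equivalent: (1) H is recurrent; (2) for every net (g_i) in G there is a subnet (g_j) such that the intersection over j of g_j H g_j⁻¹ is not the trivial subgroup {e}; (3) there exists a finite subset F ⊆ G ∖ {e} such that F ∩ gHg⁻¹ ≠ ∅ for every g ∈ G; (4) there exists a finite subset F ⊆ G ∖ {e} such that F ∩ K ≠ ∅ for every subgroup K in the Chabauty closure of {gHg⁻¹ : g ∈ G}. -/
noncomputable section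
open scoped ENNReal ComplexOrder
open MeasureTheory
set_option maxHeartbeats 1000000
set_option synthInstance.maxHeartbeats 1000000

universe u

variable {G : Type u} [Group G]

variable (G) in
/-- The Chabauty topology on the space of subgroups of `G`: the topology induced from the
product topology on `{0,1}^G` by identifying a subgroup with its indicator function. -/
def chabauty : TopologicalSpace (Subgroup G) :=
  letI : ∀ p : Prop, Decidable p := Classical.propDecidable
  TopologicalSpace.induced (fun (H : Subgroup G) (g : G) => decide (g ∈ H))
    (inferInstance : TopologicalSpace (G → Bool))

attribute [instance] chabauty

/-- The conjugate subgroup `gHg⁻¹`. -/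
def conjSub (g : G) (H : Subgroup G) : Subgroup G :=
  H.map (MulAut.conj g).toMonoidHom

/-- `H` is a recurrent subgroup of `G`: the trivial subgroup does not belong to the Chabauty
closure of the set of conjugates of `H`. -/
def IsRecurrent (H : Subgroup G) : Prop :=
  (⊥ : Subgroup G) ∉ closure {K : Subgroup G | ∃ g : G, K = conjSub g H}

/-!
A Chabauty neighbourhood of `K` fixes the trace of `K` on a finite subset of `G`. Hence `⊥` is a
limit of a family of subgroups exactly when no finite `F ⊆ G \ {e}` meets every member, and a set
`F` meeting every member also meets every limit. A net of subgroups has a subnet with non-trivial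
intersection exactly when some `s ≠ e` lies in cofinally many of its terms. If a finite `F` meets
all the terms, the pigeonhole principle provides such an `s` in `F`; if no such `F` exists, choosing
for every finite `F` a member that avoids `F \ {e}` gives a net, indexed by the finite subsets of
`G` under inclusion, in which every `s ≠ e` is eventually avoided.
-/

open Filter Topology

theorem nhds_chabauty (K : Subgroup G) :
    𝓝 K = ⨅ s : G, 𝓟 {L : Subgroup G | s ∈ L ↔ s ∈ K} := by
  refine (nhds_induced _ K).trans ?_
  simp only [nhds_pi, Filter.pi, comap_iInf, nhds_discrete, comap_pure, comap_principal]
  refine iInf_congr fun s => congrArg 𝓟 (Set.ext fun L => ?_)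
  simp

theorem mem_closure_chabauty_iff {𝓢 : Set (Subgroup G)} {K : Subgroup G} :
    K ∈ closure 𝓢 ↔ ∀ F : Finset G, ∃ L ∈ 𝓢, ∀ s ∈ F, (s ∈ L ↔ s ∈ K) := by
  have basis := nhds_chabauty K ▸
    hasBasis_iInf_principal_finite fun s : G => {L : Subgroup G | s ∈ L ↔ s ∈ K}
  simp only [mem_closure_iff_nhds_basis basis, Set.mem_iInter, Set.mem_ofPred_eq]
  exact ⟨fun h F => h F F.finite_toSet, fun h t ht => by simpa using h ht.toFinset⟩

/-- A finite set `F ⊆ G \ {e}` is confining for a set of subgroups if it meets each of them. -/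
def IsConfining (F : Finset G) (𝓢 : Set (Subgroup G)) : Prop :=
  (1 : G) ∉ F ∧ ∀ K ∈ 𝓢, ∃ s ∈ F, s ∈ K

theorem IsConfining.mono {F : Finset G} {𝓢 𝓣 : Set (Subgroup G)} (hF : IsConfining F 𝓣)
    (h𝓢 : 𝓢 ⊆ 𝓣) : IsConfining F 𝓢 :=
  ⟨hF.1, fun K hK => hF.2 K (h𝓢 hK)⟩

theorem IsConfining.closure {F : Finset G} {𝓢 : Set (Subgroup G)} (hF : IsConfining F 𝓢) :
    IsConfining F (closure 𝓢) := by
  refine ⟨hF.1, fun K hK => ?_⟩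
  obtain ⟨L, hL, hLK⟩ := mem_closure_chabauty_iff.1 hK F
  obtain ⟨s, hsF, hsL⟩ := hF.2 L hL
  exact ⟨s, hsF, (hLK s hsF).1 hsL⟩

theorem IsConfining.bot_notMem {F : Finset G} {𝓢 : Set (Subgroup G)} (hF : IsConfining F 𝓢) :
    ⊥ ∉ 𝓢 := by
  intro hbot
  obtain ⟨s, hsF, hs⟩ := hF.2 ⊥ hbot
  exact hF.1 (Subgroup.mem_bot.1 hs ▸ hsF)

theorem exists_forall_mem_eq_one_of_not_isConfining {𝓢 : Set (Subgroup G)}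
    (h : ¬∃ F, IsConfining F 𝓢) (F : Finset G) : ∃ K ∈ 𝓢, ∀ s ∈ F, s ∈ K → s = 1 := by
  classical
  by_contra! hF
  refine h ⟨F.erase 1, F.notMem_erase 1, fun K hK => ?_⟩
  obtain ⟨s, hsF, hsK, hs⟩ := hF K hK
  exact ⟨s, Finset.mem_erase.2 ⟨hs, hsF⟩, hsK⟩

theorem exists_isConfining_of_bot_notMem_closure {𝓢 : Set (Subgroup G)} (h : ⊥ ∉ closure 𝓢) :
    ∃ F, IsConfining F 𝓢 := by
  by_contra hconf
  refine h (mem_closure_chabauty_iff.2 fun F => ?_)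
  obtain ⟨K, hK, hKF⟩ := exists_forall_mem_eq_one_of_not_isConfining hconf F
  exact ⟨K, hK, fun s hs => ⟨fun hsK => Subgroup.mem_bot.2 (hKF s hs hsK),
    fun hs1 => Subgroup.mem_bot.1 hs1 ▸ K.one_mem⟩⟩

section Nets

universe v w

/-- The net `K` of subgroups has a subnet with non-trivial total intersection. A subnet is taken
along a monotone cofinal map from a directed set in the universe of the original index set. -/
def HasNontrivialSubnet {ι : Type v} [Preorder ι] (K : ι → Subgroup G) : Prop :=
  ∃ (κ : Type v) (_ : Preorder κ), IsDirected κ (· ≤ ·) ∧ Nonempty κ ∧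
    ∃ θ : κ → ι, Monotone θ ∧ (∀ i : ι, ∃ j : κ, i ≤ θ j) ∧ (⨅ j : κ, K (θ j)) ≠ ⊥

theorem hasNontrivialSubnet_iff_frequently {ι : Type v} [Preorder ι] [IsDirected ι (· ≤ ·)]
    [Nonempty ι] {K : ι → Subgroup G} :
    HasNontrivialSubnet K ↔ ∃ s : G, s ≠ 1 ∧ ∃ᶠ i in atTop, s ∈ K i := by
  constructor
  · rintro ⟨κ, _, _, _, θ, _, hcof, hne⟩
    obtain ⟨s, hs, hs1⟩ := (Subgroup.bot_or_exists_ne_one _).resolve_left hne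
    refine ⟨s, hs1, frequently_atTop.2 fun i => ?_⟩
    obtain ⟨j, hj⟩ := hcof i
    exact ⟨θ j, hj, Subgroup.mem_iInf.1 hs j⟩
  · rintro ⟨s, hs1, hs⟩
    rw [frequently_atTop] at hs
    refine ⟨{i // s ∈ K i}, inferInstance, ⟨fun a b => ?_⟩, ?_, Subtype.val,
      Subtype.mono_coe _, fun i => ?_, ?_⟩
    · obtain ⟨c, hac, hbc⟩ := exists_ge_ge a.1 b.1
      obtain ⟨j, hcj, hj⟩ := hs c
      exact ⟨⟨j, hj⟩, hac.trans hcj, hbc.trans hcj⟩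
    · obtain ⟨j, -, hj⟩ := hs (Classical.arbitrary ι)
      exact ⟨⟨j, hj⟩⟩
    · obtain ⟨j, hij, hj⟩ := hs i
      exact ⟨⟨j, hj⟩, hij⟩
    · exact fun hbot => hs1 (Subgroup.mem_bot.1 (hbot ▸ Subgroup.mem_iInf.2 Subtype.prop))

theorem IsConfining.hasNontrivialSubnet {F : Finset G} {ι : Type v} [Preorder ι]
    [IsDirected ι (· ≤ ·)] [Nonempty ι] {K : ι → Subgroup G} (hF : IsConfining F (Set.range K)) :
    HasNontrivialSubnet K := by
  rw [hasNontrivialSubnet_iff_frequently]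
  obtain ⟨s, hsF, hs⟩ := (frequently_exists_finset F).1
    (Frequently.of_forall (f := atTop) fun i => hF.2 (K i) (Set.mem_range_self i))
  exact ⟨s, ne_of_mem_of_not_mem hsF hF.1, hs⟩

theorem not_hasNontrivialSubnet_of_forall_mem_eq_one {K : Finset G → Subgroup G}
    (hK : ∀ F, ∀ s ∈ F, s ∈ K F → s = 1) : ¬HasNontrivialSubnet K := by
  rw [hasNontrivialSubnet_iff_frequently]
  rintro ⟨s, hs1, hs⟩
  obtain ⟨F, hsK, hsF⟩ := (hs.and_eventually (eventually_ge_atTop {s})).exists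
  exact hs1 (hK F s (Finset.singleton_subset_iff.1 hsF) hsK)

theorem isRecurrent_tfae_general {α : Type w} (K : α → Subgroup G) :
    List.TFAE
      [ ⊥ ∉ closure (Set.range K),
        ∀ (ι : Type u) [Preorder ι] [IsDirected ι (· ≤ ·)] [Nonempty ι] (a : ι → α),
          HasNontrivialSubnet fun i => K (a i),
        ∃ F, IsConfining F (Set.range K),
        ∃ F, IsConfining F (closure (Set.range K)) ] := by
  tfae_have 1 → 3 := exists_isConfining_of_bot_notMem_closure
  tfae_have 3 → 4 := fun ⟨F, hF⟩ => ⟨F, hF.closure⟩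
  tfae_have 4 → 1 := fun ⟨_, hF⟩ => hF.bot_notMem
  tfae_have 3 → 2 := fun ⟨_, hF⟩ _ _ _ _ a =>
    (hF.mono (Set.range_comp_subset_range a K)).hasNontrivialSubnet
  tfae_have 2 → 3 := by
    intro h
    by_contra hconf
    have avoid (F : Finset G) : ∃ a, ∀ s ∈ F, s ∈ K a → s = 1 := by
      simpa using exists_forall_mem_eq_one_of_not_isConfining hconf F
    choose a ha using avoid
    exact not_hasNontrivialSubnet_of_forall_mem_eq_one ha (h (Finset G) a)
  tfae_finish

end Nets

/-- Characterizations of recurrent subgroups: recurrence; every net of conjugates has a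
subnet with non-trivial intersection; some finite set `F ⊆ G \ {e}` meets every conjugate;
some finite set `F ⊆ G \ {e}` meets every Chabauty-limit of conjugates. -/
theorem isRecurrent_tfae (G : Type u) [Group G] (H : Subgroup G) :
    List.TFAE
      [ IsRecurrent H,
        ∀ (ι : Type u) [Preorder ι] [IsDirected ι (· ≤ ·)] [Nonempty ι] (gi : ι → G),
          ∃ (κ : Type u) (_ : Preorder κ), IsDirected κ (· ≤ ·) ∧ Nonempty κ ∧
            ∃ θ : κ → ι, Monotone θ ∧ (∀ i : ι, ∃ j : κ, i ≤ θ j) ∧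
              (⨅ j : κ, conjSub (gi (θ j)) H) ≠ ⊥,
        ∃ F : Finset G, (1 : G) ∉ F ∧ ∀ g : G, ∃ s ∈ F, s ∈ conjSub g H,
        ∃ F : Finset G, (1 : G) ∉ F ∧
          ∀ K ∈ closure {L : Subgroup G | ∃ g : G, L = conjSub g H}, ∃ s ∈ F, s ∈ K ] := by
  have conjugates : {L : Subgroup G | ∃ g : G, L = conjSub g H} = Set.range (conjSub · H) :=
    Set.ext fun _ => exists_congr fun _ => eq_comm
  simpa only [IsRecurrent, HasNontrivialSubnet, IsConfining, conjugates, Set.forall_mem_range]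
    using isRecurrent_tfae_general (conjSub · H)
end
end

section
/- A discrete group G is C*-simple if and only if for every bounded linear functional φ on C*_λ(G) and every a ∈ C*_λ(G), the infimum over b in K of |φ(b) − φ(1)τ_λ(a)| equals 0, where K denotes the norm closed convex hull of {λ_g a λ_g⁻¹ : g ∈ G}. -/
noncomputable section
open scoped ENNReal ComplexOrder lp
open MeasureTheory
set_option maxHeartbeats 1000000
set_option synthInstance.maxHeartbeats 1000000

universe u

variable {G : Type u} [Group G]

theorem translat_mem (g : G) (f : ℓ²(G, ℂ)) : Memℓp (fun h => f (g⁻¹ * h)) 2 := by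
  have hf : Summable fun i : G => ‖f i‖ ^ (2 : ℝ≥0∞).toReal :=
    (memℓp_gen_iff (by norm_num)).1 (lp.memℓp f)
  exact memℓp_gen ((Equiv.mulLeft g⁻¹).summable_iff.2 hf)

/-- The left regular representation of `g ∈ G` as a linear isometric bijection of `ℓ²(G)`,
given by `(λ_g ξ)(h) = ξ(g⁻¹ h)`. -/
def lregE (g : G) : ℓ²(G, ℂ) ≃ₗᵢ[ℂ] ℓ²(G, ℂ) :=
{ toFun := fun f => ⟨fun h => f (g⁻¹ * h), translat_mem g f⟩
  invFun := fun f => ⟨fun h => f (g * h), by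
    have := translat_mem g⁻¹ f; simp only [inv_inv] at this; exact this⟩
  map_add' := by intro f₁ f₂; ext h; simp [lp.coeFn_add]; rfl
  map_smul' := by intro c f; ext h; simp [lp.coeFn_smul]
  left_inv := by intro f; ext h; simp
  right_inv := by intro f; ext h; simp
  norm_map' := by
    intro f
    rw [lp.norm_eq_tsum_rpow (by norm_num) f, lp.norm_eq_tsum_rpow (by norm_num)]
    congr 1
    exact (Equiv.mulLeft g⁻¹).tsum_eq (fun h => ‖f h‖ ^ (2 : ℝ≥0∞).toReal) }

/-- The left regular representation `λ` as bounded operators on `ℓ²(G)`. -/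
def lreg (g : G) : ℓ²(G, ℂ) →L[ℂ] ℓ²(G, ℂ) :=
  (lregE g).toContinuousLinearEquiv.toContinuousLinearMap

variable (G) in
/-- The reduced group C*-algebra `C*_λ(G)`: the norm-closed star subalgebra of the algebra of
bounded operators on `ℓ²(G)` generated by the image of the left regular representation. -/
def redCstar : StarSubalgebra ℂ (ℓ²(G, ℂ) →L[ℂ] ℓ²(G, ℂ)) :=
  (StarAlgebra.adjoin ℂ (Set.range (lreg (G := G)))).topologicalClosure

/-- `λ_g` as an element of the reduced group C*-algebra. -/
def uu (g : G) : redCstar G :=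
  ⟨lreg g, StarSubalgebra.le_topologicalClosure _ (StarAlgebra.subset_adjoin ℂ _ ⟨g, rfl⟩)⟩

variable (G) in
/-- `G` is C*-simple: `C*_λ(G)` has no closed two-sided ideals other than `{0}` and the
whole algebra. -/
def IsCstarSimple : Prop :=
  ∀ I : TwoSidedIdeal (redCstar G), IsClosed (I : Set (redCstar G)) → I = ⊥ ∨ I = ⊤

/-- The vector `δ_e ∈ ℓ²(G)`. -/
def deltaOne : ℓ²(G, ℂ) := letI := Classical.decEq G; lp.single 2 (1 : G) 1

variable (G) in
/-- The canonical tracial state `τ_λ(a) = ⟨a δ_e, δ_e⟩` on the reduced C*-algebra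
(as a scalar-valued function). -/
def tauF (a : redCstar G) : ℂ :=
  inner (𝕜 := ℂ) (deltaOne (G := G)) ((a : ℓ²(G, ℂ) →L[ℂ] ℓ²(G, ℂ)) (deltaOne (G := G)))

attribute [irreducible] redCstar lreg lregE deltaOne uu tauF

/-!
Suppose that `G` is C*-simple. Conjugation by `G` acts on the states of `B(ℓ²(G))`; let `Q` be a
minimal nonempty invariant weak-⋆ closed convex set of states and let `y` be an extreme point of
`Q`. Evaluation along the orbit of `y` is a Poisson map `E : B(ℓ²(G)) → ℓ^∞(G/H)`, where `H` is the
stabilizer of `y`. By minimality, any invariant closed convex set of states of `B(ℓ²(G/H))` contains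
a state `ω` with `ω ∘ E = y`; as `y` is extreme, Cauchy–Schwarz puts the range of `E` into the
multiplicative domain of `ω`, so that `ω` vanishes at every `t ∈ G` that moves `y`. The same works
over `G` in place of `G/H`.

It remains to choose `y` with small stabilizer. The restriction of `y` to `ℓ^∞(G)` is an
`H`-invariant mean, so the indicator function of `H` is a state of `C*_λ(G)` whose GNS
representation is `ℓ²(G/H)`. Simplicity makes this representation isometric, hence the canonical
trace extends to `B(ℓ²(G/H))`. If `y` has, among all extreme points of `Q`, the fewest stabilizer
elements in a finite set `F`, then an extension `ω` of the trace as above gives mass one to the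
fixed points in `G/H` of any `t ∈ F ∩ H`, which forces `ω(t) = 1` and so `t = 1`.

Thus every invariant closed convex set of states of `C*_λ(G)` contains the trace, and by
Hahn–Banach `τ_λ(a)` is a norm limit of averages of the conjugates of `a`. Conversely, a functional
that vanishes on a proper closed ideal `I` but not at `1` contradicts weak averaging at
`a = x* x` with `0 ≠ x ∈ I`, because the trace is faithful.
-/

section States

variable {A B : Type*} [CStarAlgebra A] [CStarAlgebra B]

/-- A state of a C⋆-algebra, as a point of the weak-⋆ dual. Positivity is asked on elements
`star b * b`, so that no order on `B` has to be chosen. -/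
structure IsState (φ : WeakDual ℂ B) : Prop where
  map_one : φ 1 = 1
  apply_star_mul_self_nonneg (b : B) : 0 ≤ φ (star b * b)

variable (B) in
/-- The state space of a C⋆-algebra, inside its weak-⋆ dual. -/
def stateSpace : Set (WeakDual ℂ B) := {φ | IsState φ}

/-- The adjoint `φ ↦ φ ∘ f` of a bounded linear map, between weak-⋆ duals. -/
def weakDualMap (f : A →L[ℂ] B) (φ : WeakDual ℂ B) : WeakDual ℂ A :=
  StrongDual.toWeakDual ((WeakDual.toStrongDual φ).comp f)

@[simp]
theorem weakDualMap_apply (f : A →L[ℂ] B) (φ : WeakDual ℂ B) (a : A) :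
    weakDualMap f φ a = φ (f a) := rfl

theorem continuous_weakDualMap (f : A →L[ℂ] B) : Continuous (weakDualMap f) :=
  WeakDual.continuous_of_continuous_eval fun a => WeakDual.eval_continuous (f a)

theorem isLinearMap_weakDualMap (f : A →L[ℂ] B) : IsLinearMap ℝ (weakDualMap f) where
  map_add _ _ := rfl
  map_smul _ _ := rfl

/-- A ⋆-homomorphism of C⋆-algebras as a bounded linear map. -/
def starAlgHomCLM (f : A →⋆ₐ[ℂ] B) : A →L[ℂ] B :=
  LinearMap.mkContinuous f.toAlgHom.toLinearMap 1 fun a => by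
    simpa using NonUnitalStarAlgHom.norm_apply_le f a

@[simp]
theorem starAlgHomCLM_apply (f : A →⋆ₐ[ℂ] B) (a : A) : starAlgHomCLM f a = f a := rfl

theorem norm_sq_add_I_smul_one_le {b : B} (hb : IsSelfAdjoint b) (t : ℝ) :
    ‖b + (t * Complex.I) • (1 : B)‖ ^ 2 ≤ ‖b‖ ^ 2 + t ^ 2 := by
  cases subsingleton_or_nontrivial B
  · simp [Subsingleton.elim b 0, Subsingleton.elim (1 : B) 0, sq_nonneg]
  have hmul : star (b + (t * Complex.I) • (1 : B)) * (b + (t * Complex.I) • (1 : B)) =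
      b * b + ((t ^ 2 : ℝ) : ℂ) • (1 : B) := by
    have hI : (t * Complex.I) * (t * Complex.I) = -((t ^ 2 : ℝ) : ℂ) := by
      linear_combination (norm := (push_cast; ring)) (t ^ 2 : ℂ) * Complex.I_mul_I
    simp [hb.star_eq, add_mul, mul_add, smul_smul, hI]
  calc ‖b + (t * Complex.I) • (1 : B)‖ ^ 2 = ‖b * b + ((t ^ 2 : ℝ) : ℂ) • (1 : B)‖ := by
        rw [sq, ← CStarRing.norm_star_mul_self, hmul]
    _ ≤ ‖b * b‖ + ‖((t ^ 2 : ℝ) : ℂ) • (1 : B)‖ := norm_add_le _ _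
    _ ≤ ‖b‖ ^ 2 + t ^ 2 := by
        rw [norm_smul, norm_one, mul_one, Complex.norm_real, Real.norm_of_nonneg (sq_nonneg t),
          sq ‖b‖]
        gcongr
        exact norm_mul_le b b

namespace IsState

variable {φ : WeakDual ℂ B}

theorem apply_nonneg [PartialOrder B] [StarOrderedRing B] (hφ : IsState φ) {b : B} (hb : 0 ≤ b) :
    0 ≤ φ b := by
  obtain ⟨c, rfl⟩ := CStarAlgebra.nonneg_iff_eq_star_mul_self.1 hb
  exact hφ.apply_star_mul_self_nonneg c

/-- A state as a positive linear map, the form in which Mathlib's GNS construction takes it. -/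
def toPositiveLinearMap [PartialOrder B] [StarOrderedRing B] (hφ : IsState φ) : B →ₚ[ℂ] ℂ :=
  PositiveLinearMap.mk₀ (WeakDual.toStrongDual φ : B →ₗ[ℂ] ℂ) fun _ => hφ.apply_nonneg

theorem map_star (hφ : IsState φ) (b : B) : φ (star b) = star (φ b) := by
  let _ := CStarAlgebra.spectralOrder B
  let _ := CStarAlgebra.spectralOrderedRing B
  exact StarHomClass.map_star hφ.toPositiveLinearMap b

theorem norm_apply_mul_le (hφ : IsState φ) (a b : B) :
    ‖φ (star a * b)‖ ≤ √(φ (star a * a)).re * √(φ (star b * b)).re := by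
  let _ := CStarAlgebra.spectralOrder B
  let _ := CStarAlgebra.spectralOrderedRing B
  let f := hφ.toPositiveLinearMap
  have h := norm_inner_le_norm (𝕜 := ℂ) (f.toPreGNS a) (f.toPreGNS b)
  simp only [PositiveLinearMap.preGNS_norm_def, PositiveLinearMap.preGNS_inner_def,
    PositiveLinearMap.ofPreGNS_toPreGNS] at h
  exact h

theorem apply_mul_eq_zero (hφ : IsState φ) {x : B} (hx : φ (star x * x) = 0) (b : B) :
    φ (b * x) = 0 := by
  simpa [hx] using hφ.norm_apply_mul_le (star b) x

theorem norm_apply_le (hφ : IsState φ) (b : B) : ‖φ b‖ ≤ ‖b‖ := by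
  let _ := CStarAlgebra.spectralOrder B
  let _ := CStarAlgebra.spectralOrderedRing B
  have hsq : (φ (star b * b)).re ≤ ‖b‖ ^ 2 := by
    have h := hφ.toPositiveLinearMap.norm_apply_le_of_nonneg _ (star_mul_self_nonneg b)
    have h1 : hφ.toPositiveLinearMap 1 = 1 := hφ.map_one
    rw [h1, norm_one, one_mul, CStarRing.norm_star_mul_self, ← sq] at h
    exact (Complex.re_le_norm _).trans h
  calc ‖φ b‖ ≤ √(φ (star b * b)).re := by
        simpa [hφ.map_one] using hφ.norm_apply_mul_le 1 b
    _ ≤ ‖b‖ := Real.sqrt_le_left (norm_nonneg b) |>.2 hsq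

theorem im_eq_zero_of_norm_le (h1 : φ 1 = 1) (hle : ∀ b, ‖φ b‖ ≤ ‖b‖) {b : B}
    (hb : IsSelfAdjoint b) : (φ b).im = 0 := by
  have key (t : ℝ) : ((φ b).im + t) ^ 2 ≤ ‖b‖ ^ 2 + t ^ 2 := by
    have him : (φ (b + (t * Complex.I) • 1)).im = (φ b).im + t := by simp [h1]
    calc ((φ b).im + t) ^ 2 ≤ ‖φ (b + (t * Complex.I) • 1)‖ ^ 2 :=
          sq_le_sq' (abs_le.1 (him ▸ Complex.abs_im_le_norm _)).1
            (abs_le.1 (him ▸ Complex.abs_im_le_norm _)).2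
      _ ≤ ‖b + (t * Complex.I) • (1 : B)‖ ^ 2 := by gcongr; exact hle _
      _ ≤ ‖b‖ ^ 2 + t ^ 2 := norm_sq_add_I_smul_one_le hb t
  -- `key` fails for large `t` of the same sign as `(φ b).im`.
  by_contra him
  have h := key ((‖b‖ ^ 2 + 1) / (2 * (φ b).im))
  have hcross : 2 * (φ b).im * ((‖b‖ ^ 2 + 1) / (2 * (φ b).im)) = ‖b‖ ^ 2 + 1 := by field_simp
  nlinarith [sq_nonneg (φ b).im]

theorem of_norm_le (h1 : φ 1 = 1) (hle : ∀ b, ‖φ b‖ ≤ ‖b‖) : IsState φ where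
  map_one := h1
  apply_star_mul_self_nonneg b := by
    let _ := CStarAlgebra.spectralOrder B
    let _ := CStarAlgebra.spectralOrderedRing B
    set c := star b * b
    have hc : 0 ≤ c := star_mul_self_nonneg b
    have him := im_eq_zero_of_norm_le h1 hle (IsSelfAdjoint.of_nonneg hc)
    have hnorm : ‖(‖c‖ : ℂ) • (1 : B) - c‖ ≤ ‖c‖ := by
      have hle : c ≤ (‖c‖ : ℂ) • (1 : B) := by
        simpa [Algebra.algebraMap_eq_smul_one] using
          IsSelfAdjoint.le_algebraMap_norm_self (IsSelfAdjoint.of_nonneg hc)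
      refine (CStarAlgebra.norm_le_norm_of_nonneg_of_le (sub_nonneg.2 hle)
        (sub_le_self _ hc)).trans ?_
      cases subsingleton_or_nontrivial B
      · simp [Subsingleton.elim (1 : B) 0]
      · simp [norm_smul]
    have hre : ‖c‖ - (φ c).re ≤ ‖c‖ := by
      have h := (Complex.re_le_norm _).trans ((hle _).trans hnorm)
      rw [map_sub, map_smul, h1] at h
      simpa using h
    exact Complex.le_def.2 ⟨by simpa using hre, by simp [him]⟩

theorem comp_starAlgHom (hφ : IsState φ) (f : A →⋆ₐ[ℂ] B) :
    IsState (weakDualMap (starAlgHomCLM f) φ) where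
  map_one := by simpa using hφ.map_one
  apply_star_mul_self_nonneg a := by
    simpa [StarHomClass.map_star] using hφ.apply_star_mul_self_nonneg (f a)

theorem apply_mul_of_apply_star_mul_self (hφ : IsState φ) {x : B}
    (hx : φ (star x * x) = star (φ x) * φ x) (b : B) : φ (b * x) = φ b * φ x := by
  -- Cauchy–Schwarz for `x - φ x • 1`, whose variance vanishes.
  have hvar : φ (star (x - φ x • 1) * (x - φ x • 1)) = 0 := by
    simp [sub_mul, mul_sub, hx, hφ.map_one, hφ.map_star]
  have h := hφ.apply_mul_eq_zero hvar b
  rw [mul_sub, map_sub, mul_smul_comm, mul_one, map_smul, smul_eq_mul] at h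
  linear_combination h

theorem apply_mul_of_apply_mul_star_self (hφ : IsState φ) {x : B}
    (hx : φ (x * star x) = φ x * star (φ x)) (b : B) : φ (x * b) = φ x * φ b := by
  have h := hφ.apply_mul_of_apply_star_mul_self (x := star x)
    (by simpa [hφ.map_star] using hx) (star b)
  rw [← star_mul, hφ.map_star, hφ.map_star, hφ.map_star, ← star_mul] at h
  exact star_injective h

end IsState

theorem isClosed_stateSpace : IsClosed (stateSpace B) := by
  have h : stateSpace B = {φ | φ 1 = 1} ∩ ⋂ b, {φ | 0 ≤ φ (star b * b)} := by
    ext φ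
    simp only [Set.mem_inter_iff, Set.mem_iInter]
    exact ⟨fun h => ⟨h.1, h.2⟩, fun h => ⟨h.1, h.2⟩⟩
  rw [h]
  exact (isClosed_eq (WeakDual.eval_continuous 1) continuous_const).inter <|
    isClosed_iInter fun b => isClosed_le continuous_const (WeakDual.eval_continuous (star b * b))

theorem isCompact_stateSpace : IsCompact (stateSpace B) := by
  refine (WeakDual.isCompact_closedBall (𝕜 := ℂ) (E := B) 0 1).of_isClosed_subset
    isClosed_stateSpace fun φ hφ => ?_
  simp only [Set.mem_preimage, mem_closedBall_zero_iff]
  exact ContinuousLinearMap.opNorm_le_bound _ zero_le_one fun b => by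
    simpa using IsState.norm_apply_le hφ b

theorem convex_stateSpace : Convex ℝ (stateSpace B) := by
  intro φ hφ ψ hψ a b ha hb hab
  refine ⟨?_, fun x => ?_⟩
  · change a • φ 1 + b • ψ 1 = 1
    rw [hφ.map_one, hψ.map_one, ← add_smul, hab, one_smul]
  · exact add_nonneg (smul_nonneg ha (hφ.2 x)) (smul_nonneg hb (hψ.2 x))

instance : IsScalarTower ℝ ℂ (WeakDual ℂ B) :=
  ⟨fun r c φ => DFunLike.ext _ _ fun b => smul_assoc r c (φ b)⟩

instance : LocallyConvexSpace ℝ (WeakDual ℂ B) :=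
  (WeakDual.withSeminorms (𝕜 := ℂ) (E := B)).toLocallyConvexSpace

theorem exists_re_apply_lt_of_notMem {Q : Set (WeakDual ℂ B)} (hconv : Convex ℝ Q)
    (hclosed : IsClosed Q) {ψ : WeakDual ℂ B} (hψ : ψ ∉ Q) :
    ∃ (b : B) (u : ℝ), (∀ φ ∈ Q, (φ b).re < u) ∧ u < (ψ b).re := by
  have hsep :=
    RCLike.geometric_hahn_banach_closed_point (𝕜 := ℂ) (E := WeakDual ℂ B) hconv hclosed hψ
  obtain ⟨f, u, hQ, hu⟩ := hsep
  obtain ⟨b, rfl⟩ := LinearMap.dualEmbedding_surjective (topDualPairing ℂ B) f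
  exact ⟨b, u, hQ, hu⟩

end States

section Actions

variable {B C : Type*} [CStarAlgebra B] [CStarAlgebra C]
  {α : G →* (B ≃⋆ₐ[ℂ] B)} {β : G →* (C ≃⋆ₐ[ℂ] C)}

/-- The action on the weak-⋆ dual that is contragredient to an action on a C⋆-algebra. -/
def dualAut (α : G →* (B ≃⋆ₐ[ℂ] B)) : G →* (WeakDual ℂ B ≃ₗ[ℝ] WeakDual ℂ B) :=
  MonoidHom.mk'
    (fun g => LinearEquiv.ofLinearMap
      (isLinearMap_weakDualMap (starAlgHomCLM (α g⁻¹ : B →⋆ₐ[ℂ] B))).mk'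
      (isLinearMap_weakDualMap (starAlgHomCLM (α g : B →⋆ₐ[ℂ] B))).mk'
      (LinearMap.ext fun φ => DFunLike.ext _ _ fun b => by simp [StarAlgEquiv.aut_inv])
      (LinearMap.ext fun φ => DFunLike.ext _ _ fun b => by simp [StarAlgEquiv.aut_inv]))
    fun g h => LinearEquiv.ext fun φ => DFunLike.ext _ _ fun b => by simp

@[simp]
theorem dualAut_apply (α : G →* (B ≃⋆ₐ[ℂ] B)) (g : G) (φ : WeakDual ℂ B) (b : B) :
    dualAut α g φ b = φ (α g⁻¹ b) := rfl

/-- A nonempty weak-⋆ closed convex set of states that is stable under a group action. -/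
structure IsInvariantStateSet (α : G →* (B ≃⋆ₐ[ℂ] B)) (S : Set (WeakDual ℂ B)) : Prop where
  nonempty : S.Nonempty
  subset_stateSpace : S ⊆ stateSpace B
  isClosed : IsClosed S
  convex : Convex ℝ S
  map_mem (g : G) {φ : WeakDual ℂ B} (hφ : φ ∈ S) : dualAut α g φ ∈ S

namespace IsInvariantStateSet

variable {S Q : Set (WeakDual ℂ B)}

theorem isCompact (hS : IsInvariantStateSet α S) : IsCompact S :=
  isCompact_stateSpace.of_isClosed_subset hS.isClosed hS.subset_stateSpace

theorem exists_minimal (hS : IsInvariantStateSet α S) : ∃ Q, Minimal (IsInvariantStateSet α) Q := by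
  obtain ⟨Q, -, hQ⟩ := zorn_superset_nonempty {S | IsInvariantStateSet α S}
    (fun c hc hchain ⟨s₀, hs₀⟩ => by
      refine ⟨⋂₀ c, ⟨?_, (Set.sInter_subset_of_mem hs₀).trans (hc hs₀).subset_stateSpace,
        isClosed_sInter fun s hs => (hc hs).isClosed, convex_sInter fun s hs => (hc hs).convex,
        fun g φ hφ s hs => (hc hs).map_mem g (hφ s hs)⟩,
        fun s hs => Set.sInter_subset_of_mem hs⟩
      have : Nonempty c := ⟨⟨s₀, hs₀⟩⟩
      exact IsCompact.nonempty_sInter_of_directed_nonempty_isCompact_isClosed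
        (fun s hs t ht => (hchain.total hs ht).elim
          (fun h => ⟨s, hs, subset_rfl, h⟩) fun h => ⟨t, ht, h, subset_rfl⟩)
        (fun s hs => (hc hs).nonempty) (fun s hs => (hc hs).isCompact)
        fun s hs => (hc hs).isClosed) S hS
  exact ⟨Q, hQ⟩

theorem image_eq (hS : IsInvariantStateSet α S) (g : G) : dualAut α g '' S = S := by
  refine (Set.image_subset_iff.2 fun φ hφ => hS.map_mem g hφ).antisymm fun φ hφ => ?_
  exact ⟨dualAut α g⁻¹ φ, hS.map_mem g⁻¹ hφ, by simp⟩

theorem map_mem_extremePoints (hS : IsInvariantStateSet α S) (g : G) {φ : WeakDual ℂ B}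
    (hφ : φ ∈ S.extremePoints ℝ) : dualAut α g φ ∈ S.extremePoints ℝ := by
  have h := image_extremePoints (𝕜 := ℝ) (dualAut α g) S
  rw [hS.image_eq] at h
  exact h ▸ Set.mem_image_of_mem _ hφ

theorem weakDualMap_image {S : Set (WeakDual ℂ C)} (hS : IsInvariantStateSet β S) (L : B →L[ℂ] C)
    (hL : ∀ g b, L (α g b) = β g (L b)) (hstate : ∀ ω ∈ S, IsState (weakDualMap L ω)) :
    IsInvariantStateSet α (weakDualMap L '' S) where
  nonempty := hS.nonempty.image _
  subset_stateSpace := Set.image_subset_iff.2 hstate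
  isClosed := (hS.isCompact.image (continuous_weakDualMap L)).isClosed
  convex := by
    rintro _ ⟨φ, hφ, rfl⟩ _ ⟨ψ, hψ, rfl⟩ a b ha hb hab
    exact ⟨a • φ + b • ψ, hS.convex hφ hψ ha hb hab, rfl⟩
  map_mem g _ := by
    rintro ⟨ω, hω, rfl⟩
    exact ⟨dualAut β g ω, hS.map_mem g hω, DFunLike.ext _ _ fun b =>
      congr(ω $((hL g⁻¹ b).symm))⟩

theorem exists_weakDualMap_eq (hQ : Minimal (IsInvariantStateSet α) Q)
    {S : Set (WeakDual ℂ C)} (hS : IsInvariantStateSet β S) (L : B →L[ℂ] C)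
    (hL : ∀ g b, L (α g b) = β g (L b)) (hSQ : ∀ ω ∈ S, weakDualMap L ω ∈ Q)
    {y : WeakDual ℂ B} (hy : y ∈ Q) : ∃ ω ∈ S, weakDualMap L ω = y :=
  hQ.le_of_le (hS.weakDualMap_image L hL fun ω hω => hQ.prop.subset_stateSpace (hSQ ω hω))
    (Set.image_subset_iff.2 hSQ) hy

end IsInvariantStateSet

end Actions

section Extreme

variable {A B C : Type*} [CommCStarAlgebra A] [CStarAlgebra B] [CStarAlgebra C]
  {Q : Set (WeakDual ℂ B)} {E : B →L[ℂ] A}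

theorem IsState.exists_reweighting {φ : WeakDual ℂ C} (hφ : IsState φ) (c : C) :
    ∃ ν : WeakDual ℂ C, IsState ν ∧ ∀ x, φ (star c * x * c) = φ (star c * c) * ν x := by
  rcases eq_or_ne (φ (star c * c)) 0 with hc | hc
  · exact ⟨φ, hφ, fun x => by rw [hφ.apply_mul_eq_zero hc, hc, zero_mul]⟩
  let ν : WeakDual ℂ C :=
    (φ (star c * c))⁻¹ • weakDualMap (ContinuousLinearMap.mulLeftRight ℂ C (star c) c) φ
  have hν (x : C) : ν x = (φ (star c * c))⁻¹ * φ (star c * x * c) := rfl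
  refine ⟨ν, ⟨by rw [hν, mul_one, inv_mul_cancel₀ hc], fun b => ?_⟩, fun x => ?_⟩
  · rw [hν]
    refine mul_nonneg (inv_nonneg.2 (hφ.apply_star_mul_self_nonneg c)) ?_
    simpa [mul_assoc] using hφ.apply_star_mul_self_nonneg (b * c)
  · rw [hν, mul_inv_cancel_left₀ hc]

/-- Splitting `μ` along `f + (1 - f) = 1` writes the extreme point `μ ∘ E` as a convex combination
of two points of `Q`, one of which must be `μ ∘ E` itself. -/
theorem IsState.apply_mul_of_mem_extremePoints_of_le_one [PartialOrder A] [StarOrderedRing A]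
    (hE : ∀ ν, IsState ν → weakDualMap E ν ∈ Q) {μ : WeakDual ℂ A} (hμ : IsState μ)
    (hext : weakDualMap E μ ∈ Q.extremePoints ℝ) {f : A} (hf₀ : 0 ≤ f) (hf₁ : f ≤ 1) (b : B) :
    μ (f * E b) = μ f * μ (E b) := by
  obtain ⟨c, hc⟩ := CStarAlgebra.nonneg_iff_eq_star_mul_self.1 hf₀
  obtain ⟨d, hd⟩ := CStarAlgebra.nonneg_iff_eq_star_mul_self.1 (sub_nonneg.2 hf₁)
  obtain ⟨ν, hν, hνc⟩ := hμ.exists_reweighting c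
  obtain ⟨ρ, hρ, hρd⟩ := hμ.exists_reweighting d
  have hν_mul (x : A) : μ (f * x) = μ f * ν x := by
    rw [hc, ← hνc, mul_right_comm]
  have hρ_mul (x : A) : μ x - μ (f * x) = (1 - μ f) * ρ x := by
    rw [← map_sub, ← hμ.map_one, ← map_sub, hd, ← hρd, mul_right_comm, ← hd, sub_mul, one_mul]
  have h₀ := Complex.le_def.1 (hμ.apply_nonneg hf₀)
  have h₁ := Complex.le_def.1 (hμ.apply_nonneg (sub_nonneg.2 hf₁))
  rw [map_sub, hμ.map_one] at h₁
  have hreal : ((μ f).re : ℂ) = μ f := Complex.ext rfl (by simpa using h₀.2)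
  have hmem : weakDualMap E μ ∈ segment ℝ (weakDualMap E ν) (weakDualMap E ρ) := by
    refine ⟨(μ f).re, 1 - (μ f).re, h₀.1, by simpa using h₁.1, by ring,
      DFunLike.ext _ _ fun x => ?_⟩
    change (μ f).re • ν (E x) + (1 - (μ f).re) • ρ (E x) = μ (E x)
    rw [Complex.real_smul, Complex.real_smul, Complex.ofReal_sub, Complex.ofReal_one, hreal]
    linear_combination -hν_mul (E x) - hρ_mul (E x)
  rcases (mem_extremePoints_iff_forall_segment.1 hext).2 _ (hE ν hν) _ (hE ρ hρ) hmem with h | h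
  · rw [hν_mul, ← weakDualMap_apply E ν, h, weakDualMap_apply]
  · have hb := hρ_mul (E b)
    rw [← weakDualMap_apply E ρ, h, weakDualMap_apply] at hb
    linear_combination -hb

theorem IsState.apply_mul_of_mem_extremePoints
    (hE : ∀ ν, IsState ν → weakDualMap E ν ∈ Q) {μ : WeakDual ℂ A} (hμ : IsState μ)
    (hext : weakDualMap E μ ∈ Q.extremePoints ℝ) (f : A) (b : B) :
    μ (f * E b) = μ f * μ (E b) := by
  let _ := CStarAlgebra.spectralOrder A
  let _ := CStarAlgebra.spectralOrderedRing A
  let V : Submodule ℂ A := LinearMap.eqLocus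
    ((WeakDual.toStrongDual μ : A →ₗ[ℂ] ℂ) ∘ₗ LinearMap.mulRight ℂ (E b))
    (μ (E b) • (WeakDual.toStrongDual μ : A →ₗ[ℂ] ℂ))
  have hV : f ∈ V := by
    have h : Submodule.span ℂ ({a : A | 0 ≤ a} ∩ Metric.closedBall 0 1) ≤ V :=
      Submodule.span_le.2 fun a ⟨ha₀, ha₁⟩ => by
        have ha₁ := (CStarAlgebra.norm_le_one_iff_of_nonneg a ha₀).1 (mem_closedBall_zero_iff.1 ha₁)
        exact (hμ.apply_mul_of_mem_extremePoints_of_le_one hE hext ha₀ ha₁ b).trans (mul_comm _ _)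
    rw [CStarAlgebra.span_nonneg_inter_unitClosedBall] at h
    exact h trivial
  exact (LinearMap.mem_eqLocus.1 hV).trans (mul_comm _ _)

/-- A minimal invariant set of states is swept out by the states `ω ∘ D ∘ E` with `ω ∈ S`, and
extremality of `ω ∘ D ∘ E` puts the range of `D ∘ E` into the multiplicative domain of `ω`. -/
theorem exists_state_multiplicative_on_range {α : G →* (B ≃⋆ₐ[ℂ] B)} {β : G →* (C ≃⋆ₐ[ℂ] C)}
    (hQ : Minimal (IsInvariantStateSet α) Q) (hE : ∀ ν, IsState ν → weakDualMap E ν ∈ Q)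
    (D : A →⋆ₐ[ℂ] C) (hDE : ∀ g b, D (E (α g b)) = β g (D (E b))) {S : Set (WeakDual ℂ C)}
    (hS : IsInvariantStateSet β S) {y : WeakDual ℂ B} (hy : y ∈ Q.extremePoints ℝ) :
    ∃ ω ∈ S, (∀ f b, ω (D (f * E b)) = ω (D f) * y b) ∧ (∀ c b, ω (c * D (E b)) = ω c * y b) ∧
      ∀ c b, ω (D (E b) * c) = y b * ω c := by
  have hstate (ω) (hω : ω ∈ S) : IsState (weakDualMap (starAlgHomCLM D) ω) :=
    (hS.subset_stateSpace hω).comp_starAlgHom D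
  obtain ⟨ω, hω, hωy⟩ := IsInvariantStateSet.exists_weakDualMap_eq hQ hS
    ((starAlgHomCLM D).comp E) hDE (fun ω hω => hE _ (hstate ω hω)) (extremePoints_subset hy)
  have hy_apply (b : B) : ω (D (E b)) = y b := congr($hωy b)
  have hmul (f : A) (b : B) : ω (D (f * E b)) = ω (D f) * y b := by
    rw [← hy_apply]
    exact (hstate ω hω).apply_mul_of_mem_extremePoints hE (hωy.symm ▸ hy) f b
  have hst := hS.subset_stateSpace hω
  have hstar (b : B) : ω (star (D (E b)) * D (E b)) = star (y b) * y b := by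
    rw [← map_star, ← map_mul, hmul, map_star, hst.map_star, hy_apply]
  refine ⟨ω, hω, hmul, fun c b => ?_, fun c b => ?_⟩
  · rw [← hy_apply]
    exact hst.apply_mul_of_apply_star_mul_self (by rw [hstar, hy_apply]) c
  · rw [← hy_apply]
    exact hst.apply_mul_of_apply_mul_star_self
      (by rw [← map_star, ← map_mul, mul_comm, map_mul, map_star, hstar, hy_apply, mul_comm]) c

end Extreme

section LpAction

variable {p : ℝ≥0∞} {T : Type*}

theorem memℓp_comp_equiv {f : T → ℂ} (hf : Memℓp f p) (e : T ≃ T) : Memℓp (f ∘ e) p := by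
  rcases p.trichotomy with rfl | rfl | hp
  · exact memℓp_zero (hf.finite_dsupport.preimage e.injective.injOn)
  · exact memℓp_infty (hf.bddAbove.mono (Set.range_comp_subset_range e fun t => ‖f t‖))
  · exact memℓp_gen (e.summable_iff.2 (hf.summable hp))

theorem norm_comp_equiv [Fact (1 ≤ p)] (f : lp (fun _ : T => ℂ) p) (e : T ≃ T) :
    ‖(⟨f ∘ e, memℓp_comp_equiv (lp.memℓp f) e⟩ : lp (fun _ : T => ℂ) p)‖ = ‖f‖ := by
  rcases p.dichotomy with rfl | hp
  · exact e.iSup_comp (g := fun t => ‖f t‖)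
  · have hp := one_pos.trans_le hp
    rw [lp.norm_eq_tsum_rpow hp, lp.norm_eq_tsum_rpow hp]
    exact congr($(e.tsum_eq fun t => ‖f t‖ ^ p.toReal) ^ (1 / p.toReal))

variable (p T) in
/-- The isometric action of `G` on `ℓ^p(T)` by translation of functions on a `G`-set `T`. -/
def lpPerm [MulAction G T] [Fact (1 ≤ p)] :
    G →* (lp (fun _ : T => ℂ) p ≃ₗᵢ[ℂ] lp (fun _ : T => ℂ) p) :=
  MonoidHom.mk'
    (fun g =>
      { toFun f := ⟨f ∘ MulAction.toPerm g⁻¹, memℓp_comp_equiv (lp.memℓp f) _⟩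
        invFun f := ⟨f ∘ MulAction.toPerm g, memℓp_comp_equiv (lp.memℓp f) _⟩
        map_add' _ _ := rfl
        map_smul' _ _ := rfl
        left_inv f := lp.ext (funext fun t => by simp)
        right_inv f := lp.ext (funext fun t => by simp)
        norm_map' f := norm_comp_equiv f _ })
    fun g h => LinearIsometryEquiv.ext fun f => lp.ext <| funext fun t =>
      show f ((g * h)⁻¹ • t) = f (h⁻¹ • g⁻¹ • t) by rw [mul_inv_rev, mul_smul]

@[simp]
theorem lpPerm_apply [MulAction G T] [Fact (1 ≤ p)] (g : G) (f : lp (fun _ : T => ℂ) p) (t : T) :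
    lpPerm p T g f t = f (g⁻¹ • t) := rfl

end LpAction

section PoissonMap

variable {T B : Type*} [CStarAlgebra B] {q : T → WeakDual ℂ B}

/-- The map `b ↦ (t ↦ q t b)` from a C⋆-algebra to `ℓ^∞(T)` given by a family `q` of states. -/
def poissonMap (q : T → WeakDual ℂ B) (hq : ∀ t, IsState (q t)) : B →L[ℂ] ℓ^∞(T, ℂ) :=
  LinearMap.mkContinuous
    { toFun b := ⟨fun t => q t b, memℓp_infty ⟨‖b‖, by
        rintro _ ⟨t, rfl⟩
        exact (hq t).norm_apply_le b⟩⟩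
      map_add' b c := lp.ext (funext fun t => map_add (q t) b c)
      map_smul' z b := lp.ext (funext fun t => map_smul (q t) z b) }
    1 fun b => lp.norm_le_of_forall_le (by positivity) fun t => by
      simpa using (hq t).norm_apply_le b

@[simp]
theorem poissonMap_apply (hq : ∀ t, IsState (q t)) (b : B) (t : T) :
    poissonMap q hq b t = q t b := rfl

theorem poissonMap_map [MulAction G T] {α : G →* (B ≃⋆ₐ[ℂ] B)} (hq : ∀ t, IsState (q t))
    (hqα : ∀ (g : G) t, q (g • t) = dualAut α g (q t)) (g : G) (b : B) :
    poissonMap q hq (α g b) = lpPerm ∞ T g (poissonMap q hq b) :=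
  lp.ext <| funext fun t =>
    show q t (α g b) = q (g⁻¹ • t) b by rw [hqα, dualAut_apply, inv_inv]

theorem IsState.apply_nonneg_of_forall_nonneg {μ : WeakDual ℂ ℓ^∞(T, ℂ)} (hμ : IsState μ)
    {f : ℓ^∞(T, ℂ)} (hf : ∀ t, 0 ≤ f t) : 0 ≤ μ f := by
  have hsq (t : T) : star (√(f t).re : ℂ) * √(f t).re = f t := by
    obtain ⟨hre, him⟩ := Complex.nonneg_iff.1 (hf t)
    rw [Complex.star_def, Complex.conj_ofReal, ← Complex.ofReal_mul, Real.mul_self_sqrt hre]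
    exact Complex.ext rfl him
  have hmem : Memℓp (fun t => (√(f t).re : ℂ)) ∞ := memℓp_infty ⟨√‖f‖, by
    rintro _ ⟨t, rfl⟩
    dsimp only
    rw [Complex.norm_real, Real.norm_of_nonneg (Real.sqrt_nonneg _)]
    exact Real.sqrt_le_sqrt ((Complex.re_le_norm _).trans (lp.norm_apply_le_norm (by simp) f t))⟩
  have hf_eq : star (⟨_, hmem⟩ : ℓ^∞(T, ℂ)) * ⟨_, hmem⟩ = f := lp.ext (funext hsq)
  exact hf_eq ▸ hμ.apply_star_mul_self_nonneg _

theorem IsState.re_apply_le_of_forall_re_le {μ : WeakDual ℂ ℓ^∞(T, ℂ)} (hμ : IsState μ)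
    {f : ℓ^∞(T, ℂ)} {u : ℝ} (hf : ∀ t, (f t).re ≤ u) : (μ f).re ≤ u := by
  let d : ℓ^∞(T, ℂ) := algebraMap ℂ _ u - f
  have hd (t : T) : d t = u - f t := rfl
  have hpos : 0 ≤ μ (d + star d) := hμ.apply_nonneg_of_forall_nonneg fun t => by
    rw [lp.coeFn_add, Pi.add_apply, lp.star_apply, Complex.star_def, Complex.add_conj, hd]
    exact Complex.zero_le_real.2 (mul_nonneg zero_le_two (by simpa using hf t))
  have hμd : μ d = u - μ f := by
    rw [map_sub, Algebra.algebraMap_eq_smul_one, map_smul, hμ.map_one, smul_eq_mul, mul_one]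
  rw [map_add, hμ.map_star, Complex.star_def, Complex.add_conj, hμd] at hpos
  have : 0 ≤ 2 * (u - μ f : ℂ).re := Complex.zero_le_real.1 hpos
  simpa using this

theorem IsState.weakDualMap_poissonMap_mem {Q : Set (WeakDual ℂ B)} (hconv : Convex ℝ Q)
    (hclosed : IsClosed Q) (hq : ∀ t, IsState (q t)) (hqQ : ∀ t, q t ∈ Q)
    {μ : WeakDual ℂ ℓ^∞(T, ℂ)} (hμ : IsState μ) : weakDualMap (poissonMap q hq) μ ∈ Q := by
  by_contra hnot
  obtain ⟨b, u, hu, hμu⟩ := exists_re_apply_lt_of_notMem hconv hclosed hnot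
  exact hμu.not_ge (hμ.re_apply_le_of_forall_re_le fun t => (hu _ (hqQ t)).le)

end PoissonMap

section HilbertSpace

variable {T : Type*}

/-- The C⋆-algebra of bounded operators on `ℓ²(T)`. -/
abbrev OpL2 (T : Type*) := ℓ²(T, ℂ) →L[ℂ] ℓ²(T, ℂ)

theorem OpL2.ext {x y : OpL2 T} (h : ∀ ξ t, x ξ t = y ξ t) : x = y :=
  ContinuousLinearMap.ext fun ξ => lp.ext (funext (h ξ))

variable (G T) in
/-- The unitary representation of `G` on `ℓ²(T)` by permutations of the `G`-set `T`. -/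
def permRep [MulAction G T] : G →* unitary (OpL2 T) :=
  Unitary.linearIsometryEquiv.symm.toMonoidHom.comp (lpPerm 2 T)

@[simp]
theorem permRep_apply [MulAction G T] (g : G) (ξ : ℓ²(T, ℂ)) (t : T) :
    (permRep G T g : OpL2 T) ξ t = ξ (g⁻¹ • t) := rfl

theorem permRep_self (g : G) : (permRep G G g : OpL2 G) = lreg g := by
  unfold lreg lregE
  rfl

variable (G T) in
/-- The action of `G` on the operators on `ℓ²(T)` by conjugation with permutation unitaries. -/
def permAut [MulAction G T] : G →* (OpL2 T ≃⋆ₐ[ℂ] OpL2 T) :=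
  (Unitary.conjStarAlgAut ℂ (OpL2 T)).comp (permRep G T)

theorem permAut_apply [MulAction G T] (g : G) (x : OpL2 T) :
    permAut G T g x = permRep G T g * x * permRep G T g⁻¹ := by
  rw [map_inv]
  rfl

theorem permRep_inv_mul_permRep [MulAction G T] (g : G) :
    (permRep G T g⁻¹ * permRep G T g : OpL2 T) = 1 := by
  simp [← MulMemClass.coe_mul]

theorem permRep_mul [MulAction G T] (g : G) (x : OpL2 T) :
    permRep G T g * x = permAut G T g x * permRep G T g := by
  rw [permAut_apply, mul_assoc, permRep_inv_mul_permRep, mul_one]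

theorem norm_mul_apply_le {p : ℝ≥0∞} (f : ℓ^∞(T, ℂ)) (ξ : lp (fun _ : T => ℂ) p) (t : T) :
    ‖f t * ξ t‖ ≤ ‖((‖f‖ : ℂ) • ξ) t‖ := by
  rw [norm_mul, lp.coeFn_smul, Pi.smul_apply, norm_smul, Complex.norm_real, norm_norm]
  gcongr
  exact lp.norm_apply_le_norm ENNReal.top_ne_zero f t

variable (T) in
/-- The representation of `ℓ^∞(T)` on `ℓ²(T)` by multiplication operators. -/
def mulOp : ℓ^∞(T, ℂ) →⋆ₐ[ℂ] OpL2 T where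
  toFun f := LinearMap.mkContinuous
    { toFun ξ := ⟨fun t => f t * ξ t, (lp.memℓp ((‖f‖ : ℂ) • ξ)).mono' (norm_mul_apply_le f ξ)⟩
      map_add' ξ η := lp.ext (funext fun t => mul_add (f t) (ξ t) (η t))
      map_smul' z ξ := lp.ext (funext fun t => mul_left_comm (f t) z (ξ t)) }
    ‖f‖ fun ξ => by
      refine (lp.norm_mono two_ne_zero (norm_mul_apply_le f ξ)).trans_eq ?_
      rw [norm_smul, Complex.norm_real, norm_norm]
  map_one' := OpL2.ext fun ξ t => one_mul (ξ t)
  map_mul' f g := OpL2.ext fun ξ t => mul_assoc (f t) (g t) (ξ t)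
  map_zero' := OpL2.ext fun ξ t => zero_mul (ξ t)
  map_add' f g := OpL2.ext fun ξ t => add_mul (f t) (g t) (ξ t)
  commutes' z := OpL2.ext fun ξ t => rfl
  map_star' f := by
    rw [ContinuousLinearMap.star_eq_adjoint, ContinuousLinearMap.eq_adjoint_iff]
    intro ξ η
    rw [lp.inner_eq_tsum, lp.inner_eq_tsum]
    congr 1 with t
    simp
    ring

@[simp]
theorem mulOp_apply (f : ℓ^∞(T, ℂ)) (ξ : ℓ²(T, ℂ)) (t : T) : mulOp T f ξ t = f t * ξ t := rfl

theorem mulOp_lpPerm [MulAction G T] (g : G) (f : ℓ^∞(T, ℂ)) :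
    mulOp T (lpPerm ∞ T g f) = permAut G T g (mulOp T f) :=
  OpL2.ext fun ξ t => by
    rw [permAut_apply]; simp [-map_inv]

variable (T) in
/-- The standard Hilbert basis of `ℓ²(T)`. -/
def stdBasis : HilbertBasis T ℂ ℓ²(T, ℂ) := .ofRepr (.refl ℂ _)

theorem inner_stdBasis (t : T) (ξ : ℓ²(T, ℂ)) : inner ℂ (stdBasis T t) ξ = ξ t :=
  ((stdBasis T).repr_apply_apply ξ t).symm

open Classical in
theorem stdBasis_apply (s t : T) : stdBasis T t s = if s = t then 1 else 0 := by
  rw [← inner_stdBasis, orthonormal_iff_ite.1 (stdBasis T).orthonormal]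

theorem deltaOne_eq_stdBasis : deltaOne (G := G) = stdBasis G 1 := by
  unfold deltaOne
  rfl

theorem permRep_stdBasis [MulAction G T] (g : G) (t : T) :
    (permRep G T g : OpL2 T) (stdBasis T t) = stdBasis T (g • t) := by
  classical
  exact lp.ext <| funext fun s => by simp [stdBasis_apply, inv_smul_eq_iff]

/-- The vector functional `x ↦ ⟪ξ, x ξ⟫`; the inner product is linear in its second argument. -/
def vectorFunctional (ξ : ℓ²(T, ℂ)) : WeakDual ℂ (OpL2 T) :=
  StrongDual.toWeakDual ((innerSL ℂ ξ).comp (ContinuousLinearMap.apply ℂ ℓ²(T, ℂ) ξ))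

theorem vectorFunctional_apply (ξ : ℓ²(T, ℂ)) (x : OpL2 T) :
    vectorFunctional ξ x = inner ℂ ξ (x ξ) := rfl

theorem isState_vectorFunctional {ξ : ℓ²(T, ℂ)} (hξ : ‖ξ‖ = 1) : IsState (vectorFunctional ξ) where
  map_one := by simp [vectorFunctional_apply, hξ]
  apply_star_mul_self_nonneg x := by
    rw [vectorFunctional_apply, mul_apply_eq_comp, ContinuousLinearMap.star_eq_adjoint,
      ContinuousLinearMap.adjoint_inner_right]
    rw [inner_self_eq_norm_sq_to_K]
    positivity

theorem isInvariantStateSet_stateSpace [Nonempty T] (α : G →* (OpL2 T ≃⋆ₐ[ℂ] OpL2 T)) :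
    IsInvariantStateSet α (stateSpace (OpL2 T)) where
  nonempty := ⟨_, isState_vectorFunctional ((stdBasis T).orthonormal.1 (Classical.arbitrary T))⟩
  subset_stateSpace := subset_rfl
  isClosed := isClosed_stateSpace
  convex := convex_stateSpace
  map_mem _ _ hφ := hφ.comp_starAlgHom _

end HilbertSpace

section Amenability

variable {X Y : Type*} [MulAction G X] [MulAction G Y]

open Classical in
/-- The unit mass at `x` as an element of `ℓ¹(X)`. -/
def diracL1 (x : X) : ℓ¹(X, ℂ) := lp.single 1 x 1

open Classical in
theorem diracL1_apply (x t : X) : diracL1 x t = if t = x then 1 else 0 := by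
  rw [diracL1, lp.single_apply, Pi.single_apply]

theorem norm_diracL1 (x : X) : ‖diracL1 x‖ = 1 := by
  classical
  rw [diracL1, lp.norm_single one_pos, norm_one]

theorem lpPerm_diracL1 (g : G) (x : X) : lpPerm 1 X g (diracL1 x) = diracL1 (g • x) := by
  classical
  exact lp.ext <| funext fun t => by simp [diracL1_apply, inv_smul_eq_iff]

theorem norm_eq_one_of_mem_convexHull {p : ℓ¹(X, ℂ)}
    (hp : p ∈ convexHull ℝ (Set.range diracL1)) : ‖p‖ = 1 := by
  have hle : convexHull ℝ (Set.range (diracL1 (X := X))) ⊆ Metric.closedBall 0 1 :=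
    convexHull_min (Set.range_subset_iff.2 fun x => by simp [norm_diracL1])
      (convex_closedBall 0 1)
  have hsum : convexHull ℝ (Set.range (diracL1 (X := X))) ⊆
      (lp.tsumCLM ℂ X ℂ).restrictScalars ℝ ⁻¹' {1} :=
    convexHull_min (Set.range_subset_iff.2 fun x => by
      classical simp [diracL1_apply])
      ((convex_singleton 1).linear_preimage _)
  have h1 : ∑' x, p x = 1 := hsum hp
  refine le_antisymm (by simpa using hle hp) ?_
  simpa [h1] using lp.norm_tsum_le p

/-- The bounded function on `Y` obtained by restricting a functional on `ℓ¹(X)` to the unit masses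
at the points of a map `q : Y → X`. -/
def evalDirac (q : Y → X) : (ℓ¹(X, ℂ) →L[ℂ] ℂ) →ₗ[ℂ] ℓ^∞(Y, ℂ) where
  toFun F := ⟨fun y => F (diracL1 (q y)), memℓp_infty ⟨‖F‖, by
    rintro _ ⟨y, rfl⟩
    simpa [norm_diracL1] using F.le_opNorm (diracL1 (q y))⟩⟩
  map_add' _ _ := rfl
  map_smul' _ _ := rfl

theorem evalDirac_apply (q : Y → X) (F : ℓ¹(X, ℂ) →L[ℂ] ℂ) (y : Y) :
    evalDirac q F y = F (diracL1 (q y)) := rfl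

theorem apply_evalDirac_comp_sub_eq_zero {q : Y → X} (hq : ∀ (g : G) y, q (g • y) = g • q y)
    {m : WeakDual ℂ ℓ^∞(Y, ℂ)} (hm : ∀ (g : G) f, m (lpPerm ∞ Y g f) = m f)
    (F : ℓ¹(X, ℂ) →L[ℂ] ℂ) (g : G) :
    m (evalDirac q (F ∘L ((lpPerm 1 X g : ℓ¹(X, ℂ) →L[ℂ] ℓ¹(X, ℂ)) - .id ℂ _))) = 0 := by
  have hF : evalDirac q (F ∘L ((lpPerm 1 X g : ℓ¹(X, ℂ) →L[ℂ] ℓ¹(X, ℂ)) - .id ℂ _)) =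
      lpPerm ∞ Y g⁻¹ (evalDirac q F) - evalDirac q F :=
    lp.ext <| funext fun y => by
      simp [evalDirac_apply, lpPerm_diracL1, hq, -map_inv]
  rw [hF, map_sub, hm, sub_self]

theorem exists_almost_invariant_mem_convexHull {q : Y → X}
    (hq : ∀ (g : G) y, q (g • y) = g • q y) {m : WeakDual ℂ ℓ^∞(Y, ℂ)} (hms : IsState m)
    (hm : ∀ (g : G) f, m (lpPerm ∞ Y g f) = m f) (E : Finset G) {ε : ℝ} (hε : 0 < ε) :
    ∃ p ∈ convexHull ℝ (Set.range fun y => diracL1 (q y)), ∀ g ∈ E, ‖lpPerm 1 X g p - p‖ < ε := by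
  classical
  let L : ℓ¹(X, ℂ) →L[ℂ] (E → ℓ¹(X, ℂ)) :=
    .pi fun g => (lpPerm 1 X g.1 : ℓ¹(X, ℂ) →L[ℂ] ℓ¹(X, ℂ)) - .id ℂ _
  set K := convexHull ℝ (Set.range fun y => diracL1 (q y))
  suffices h0 : (0 : E → ℓ¹(X, ℂ)) ∈ closure (L '' K) by
    obtain ⟨_, ⟨p, hp, rfl⟩, hlt⟩ := Metric.mem_closure_iff.1 h0 ε hε
    rw [dist_zero_left, pi_norm_lt_iff hε] at hlt
    exact ⟨p, hp, fun g hg => hlt ⟨g, hg⟩⟩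
  by_contra h0
  have hconv : Convex ℝ (L '' K) :=
    (convex_convexHull ℝ _).linear_image (L.restrictScalars ℝ).toLinearMap
  obtain ⟨F, u, hu, hF⟩ :=
    RCLike.geometric_hahn_banach_point_closed (𝕜 := ℂ) hconv.closure isClosed_closure h0
  have hm0 : m (evalDirac q (F ∘L L)) = 0 := by
    have hsum : F ∘L L = ∑ g : E, (F ∘L .single ℂ _ g) ∘L
        ((lpPerm 1 X g.1 : ℓ¹(X, ℂ) →L[ℂ] ℓ¹(X, ℂ)) - .id ℂ _) := by
      ext1 p
      rw [ContinuousLinearMap.comp_apply, ← Finset.univ_sum_single (L p), map_sum,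
        sum_apply]
      rfl
    rw [hsum, map_sum, map_sum]
    exact Finset.sum_eq_zero fun g _ => apply_evalDirac_comp_sub_eq_zero hq hm _ g.1
  have hneg := hms.re_apply_le_of_forall_re_le (f := - evalDirac q (F ∘L L)) (u := - u) fun y => by
    have := hF _ (subset_closure ⟨_, subset_convexHull ℝ _ ⟨y, rfl⟩, rfl⟩)
    simpa [evalDirac_apply] using this.le
  simp [hm0] at hneg hu
  linarith

theorem sq_sqrt_sub_sqrt_le {a b : ℝ} (ha : 0 ≤ a) (hb : 0 ≤ b) : (√a - √b) ^ 2 ≤ |a - b| :=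
  calc (√a - √b) ^ 2 = |√a - √b| * |√a - √b| := by rw [abs_mul_abs_self, sq]
    _ ≤ |√a - √b| * |√a + √b| := by
      refine mul_le_mul_of_nonneg_left ?_ (abs_nonneg _)
      rw [abs_of_nonneg (by positivity : 0 ≤ √a + √b), abs_le]
      constructor <;> linarith [Real.sqrt_nonneg a, Real.sqrt_nonneg b]
    _ = |a - b| := by rw [← abs_mul, mul_comm, ← sq_sub_sq, Real.sq_sqrt ha, Real.sq_sqrt hb]

theorem norm_l1_eq_tsum (p : ℓ¹(X, ℂ)) : ‖p‖ = ∑' t, ‖p t‖ := by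
  simpa using lp.norm_rpow_eq_tsum (by simp) p

theorem norm_l2_sq_eq_tsum (ξ : ℓ²(X, ℂ)) : ‖ξ‖ ^ 2 = ∑' t, ‖ξ t‖ ^ 2 := by
  simpa using lp.norm_rpow_eq_tsum (by simp) ξ

/-- The vector `√|p|` of `ℓ²(X)` given by an element `p` of `ℓ¹(X)`. -/
def sqrtNorm (p : ℓ¹(X, ℂ)) : ℓ²(X, ℂ) :=
  ⟨fun t => (√‖p t‖ : ℂ), memℓp_gen <| by
    simpa [Real.sq_sqrt] using (lp.memℓp p).summable one_pos⟩

theorem sqrtNorm_apply (p : ℓ¹(X, ℂ)) (t : X) : sqrtNorm p t = (√‖p t‖ : ℂ) := rfl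

theorem norm_sqrtNorm_sq (p : ℓ¹(X, ℂ)) : ‖sqrtNorm p‖ ^ 2 = ‖p‖ := by
  simp [norm_l2_sq_eq_tsum, norm_l1_eq_tsum, sqrtNorm_apply, Real.sq_sqrt]

theorem norm_sqrtNorm_sub_sq_le (p r : ℓ¹(X, ℂ)) : ‖sqrtNorm p - sqrtNorm r‖ ^ 2 ≤ ‖p - r‖ := by
  rw [norm_l2_sq_eq_tsum, norm_l1_eq_tsum]
  refine Summable.tsum_le_tsum (fun t => ?_)
    (by simpa using (lp.memℓp (sqrtNorm p - sqrtNorm r)).summable (by simp))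
    (by simpa using (lp.memℓp (p - r)).summable one_pos)
  rw [lp.coeFn_sub, lp.coeFn_sub, Pi.sub_apply, Pi.sub_apply, sqrtNorm_apply, sqrtNorm_apply,
    ← Complex.ofReal_sub, Complex.norm_real, Real.norm_eq_abs, sq_abs]
  exact (sq_sqrt_sub_sqrt_le (norm_nonneg _) (norm_nonneg _)).trans (abs_norm_sub_norm_le _ _)

theorem exists_almost_invariant_vector {q : Y → X} (hq : ∀ (g : G) y, q (g • y) = g • q y)
    {m : WeakDual ℂ ℓ^∞(Y, ℂ)} (hms : IsState m) (hm : ∀ (g : G) f, m (lpPerm ∞ Y g f) = m f)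
    (E : Finset G) {ε : ℝ} (hε : 0 < ε) :
    ∃ ξ : ℓ²(X, ℂ), ‖ξ‖ = 1 ∧ (∀ x ∉ Set.range q, ξ x = 0) ∧
      ∀ g ∈ E, ‖(permRep G X g : OpL2 X) ξ - ξ‖ ≤ ε := by
  classical
  obtain ⟨p, hp, hpE⟩ := exists_almost_invariant_mem_convexHull hq hms hm E (sq_pos_of_pos hε)
  refine ⟨sqrtNorm p, ?_, fun x hx => ?_, fun g hg => ?_⟩
  · have hnorm : ‖sqrtNorm p‖ ^ 2 = 1 := (norm_sqrtNorm_sq p).trans <|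
      norm_eq_one_of_mem_convexHull <| convexHull_mono (Set.range_comp_subset_range q diracL1) hp
    exact (pow_eq_one_iff_of_nonneg (norm_nonneg _) two_ne_zero).1 hnorm
  · have hsupp : convexHull ℝ (Set.range fun y => diracL1 (q y)) ⊆
        (lp.evalCLM ℂ (fun _ : X => ℂ) 1 x).restrictScalars ℝ ⁻¹' {0} :=
      convexHull_min (Set.range_subset_iff.2 fun y => by
        change diracL1 (q y) x = 0
        rw [diracL1_apply, if_neg fun h => hx ⟨y, h.symm⟩])
        ((convex_singleton 0).linear_preimage _)
    have hpx : p x = 0 := hsupp hp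
    simp [sqrtNorm_apply, hpx]
  · have hperm : (permRep G X g : OpL2 X) (sqrtNorm p) = sqrtNorm (lpPerm 1 X g p) := rfl
    rw [hperm]
    exact le_of_sq_le_sq ((norm_sqrtNorm_sub_sq_le _ _).trans (hpE g hg).le) hε.le

end Amenability

section Compactness

variable {B ι : Type*} [CStarAlgebra B]

theorem exists_mem_forall_apply_eq {S : Set (WeakDual ℂ B)} (hS : IsCompact S) (x : ι → B)
    (z : ι → ℂ)
    (h : ∀ (E : Finset ι) (ε : ℝ), 0 < ε → ∃ ω ∈ S, ∀ i ∈ E, ‖ω (x i) - z i‖ ≤ ε) :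
    ∃ ω ∈ S, ∀ i, ω (x i) = z i := by
  classical
  obtain ⟨ω, hω, hωx⟩ := hS.inter_iInter_nonempty
    (fun i : ι × {ε : ℝ // 0 < ε} => {ω | ‖ω (x i.1) - z i.1‖ ≤ i.2})
    (fun i => isClosed_le
      ((WeakDual.eval_continuous (x i.1)).sub continuous_const).norm continuous_const)
    fun u => by
      obtain ⟨δ, hδu⟩ := (u.image Prod.snd).finite_toSet.bddBelow
      obtain ⟨ω, hω, hωE⟩ := h (u.image Prod.fst) δ δ.2
      exact ⟨ω, hω, Set.mem_iInter₂.2 fun i hi =>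
        (hωE i.1 (Finset.mem_image_of_mem _ hi)).trans
          (hδu (Finset.mem_coe.2 (Finset.mem_image_of_mem _ hi)))⟩
  refine ⟨ω, hω, fun i => sub_eq_zero.1 <| norm_le_zero_iff.1 <|
    le_of_forall_pos_le_add fun ε hε => ?_⟩
  simpa using Set.mem_iInter.1 hωx (i, ⟨ε, hε⟩)

end Compactness

section QuasiRegular

theorem exists_equivariant_map_to_subgroup (H : Subgroup G) :
    ∃ q : G → G, Set.range q ⊆ H ∧ ∀ (h : H) g, q (h • g) = h • q g := by
  obtain ⟨T, hT, -⟩ := H.exists_isComplement_right 1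
  exact ⟨fun g => (hT.equiv g).1, Set.range_subset_iff.2 fun g => (hT.equiv g).1.2,
    fun h g => congr(($(hT.equiv_mul_left h g)).1)⟩

theorem inner_permRep_eq_zero {H : Subgroup G} {ξ : ℓ²(G, ℂ)} (hξ : ∀ s ∉ H, ξ s = 0) {g : G}
    (hg : g ∉ H) : inner ℂ ξ ((permRep G G g : OpL2 G) ξ) = 0 := by
  rw [lp.inner_eq_tsum]
  refine (tsum_congr fun s => ?_).trans tsum_zero
  by_cases hs : s ∈ H
  · have : g⁻¹ • s ∉ H := by rwa [smul_eq_mul, H.mul_mem_cancel_right hs, H.inv_mem_iff]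
    rw [permRep_apply, hξ _ this, inner_zero_right]
  · rw [hξ _ hs, inner_zero_left]

open Classical in
theorem exists_isState_apply_permRep_eq_ite {H : Subgroup G} {m : WeakDual ℂ ℓ^∞(G, ℂ)}
    (hms : IsState m) (hm : ∀ (h : H) f, m (lpPerm ∞ G h f) = m f) :
    ∃ ω : WeakDual ℂ (OpL2 G), IsState ω ∧
      ∀ g, ω (permRep G G g : OpL2 G) = if g ∈ H then 1 else 0 := by
  obtain ⟨q, hqH, hq⟩ := exists_equivariant_map_to_subgroup H
  refine exists_mem_forall_apply_eq isCompact_stateSpace _ _ fun E ε hε => ?_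
  obtain ⟨ξ, hξ, hξH, hξE⟩ :=
    exists_almost_invariant_vector hq hms hm (E.subtype (· ∈ H)) hε
  refine ⟨vectorFunctional ξ, isState_vectorFunctional hξ, fun g hg => ?_⟩
  rw [vectorFunctional_apply]
  split_ifs with hgH
  · calc ‖inner ℂ ξ ((permRep G G g : OpL2 G) ξ) - 1‖
        = ‖inner ℂ ξ ((permRep G G g : OpL2 G) ξ - ξ)‖ := by
          rw [inner_sub_right, inner_self_eq_norm_sq_to_K, hξ]
          simp
      _ ≤ ‖ξ‖ * ‖(permRep G G g : OpL2 G) ξ - ξ‖ := norm_inner_le_norm _ _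
      _ ≤ ε := by
          rw [hξ, one_mul]
          exact hξE ⟨g, hgH⟩ (Finset.mem_subtype.2 hg)
  · rw [inner_permRep_eq_zero (fun s hs => hξH s fun h => hs (hqH h)) hgH, sub_zero, norm_zero]
    exact hε.le

end QuasiRegular

section SimpleCstarAlgebra

variable {A B : Type*} [CStarAlgebra A] [CStarAlgebra B]

theorem injective_of_forall_isClosed_ideal
    (hA : ∀ I : TwoSidedIdeal A, IsClosed (I : Set A) → I = ⊥ ∨ I = ⊤) {π : A →⋆ₐ[ℂ] B}
    (hπ : π 1 ≠ 0) : Function.Injective π := by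
  have hker : ((TwoSidedIdeal.ker π : TwoSidedIdeal A) : Set A) = π ⁻¹' {0} :=
    Set.ext fun _ => TwoSidedIdeal.mem_ker π
  rw [← TwoSidedIdeal.ker_eq_bot]
  refine (hA _ (hker ▸ isClosed_singleton.preimage (starAlgHomCLM π).continuous)).resolve_right
    fun h => hπ ?_
  rw [← TwoSidedIdeal.mem_ker, h]
  trivial

theorem norm_gnsStarAlgHom_le [PartialOrder A] [StarOrderedRing A] (f : A →ₚ[ℂ] ℂ) {a : A} {M : ℝ}
    (hM : 0 ≤ M) {s : Set A} (hs : Dense s)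
    (h : ∀ c ∈ s, (f (star (a * c) * (a * c))).re ≤ M ^ 2 * (f (star c * c)).re) :
    ‖f.gnsStarAlgHom a‖ ≤ M := by
  have hf : Continuous f := map_continuous f
  have hall (c : A) : (f (star (a * c) * (a * c))).re ≤ M ^ 2 * (f (star c * c)).re :=
    hs.induction h (isClosed_le (by fun_prop) (by fun_prop)) c
  refine ContinuousLinearMap.opNorm_le_bound _ hM fun v => ?_
  induction v using UniformSpace.Completion.induction_on with
  | hp => exact isClosed_le (by fun_prop) (by fun_prop)
  | ih c =>
    have hac : f.gnsStarAlgHom a c = (f.leftMulMapPreGNS a c : f.GNS) :=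
      f.gnsNonUnitalStarAlgHom_apply_coe
    rw [hac, UniformSpace.Completion.norm_coe, UniformSpace.Completion.norm_coe,
      PositiveLinearMap.preGNS_norm_def, PositiveLinearMap.preGNS_norm_def, ← Real.sqrt_sq hM,
      ← Real.sqrt_mul (sq_nonneg M)]
    exact Real.sqrt_le_sqrt (hall (f.ofPreGNS c))

theorem IsState.norm_le_of_forall_isClosed_ideal
    (hA : ∀ I : TwoSidedIdeal A, IsClosed (I : Set A) → I = ⊥ ∨ I = ⊤) {φ : WeakDual ℂ A}
    (hφ : IsState φ) {a : A} {M : ℝ} (hM : 0 ≤ M) {s : Set A} (hs : Dense s)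
    (h : ∀ c ∈ s, (φ (star (a * c) * (a * c))).re ≤ M ^ 2 * (φ (star c * c)).re) : ‖a‖ ≤ M := by
  let _ := CStarAlgebra.spectralOrder A
  let _ := CStarAlgebra.spectralOrderedRing A
  let f := hφ.toPositiveLinearMap
  have hone : f.gnsStarAlgHom 1 ≠ 0 := fun h0 => by
    have hnorm : ‖((f.toPreGNS 1 : f.PreGNS) : f.GNS)‖ = √(φ (star 1 * 1)).re :=
      UniformSpace.Completion.norm_coe _
    have hzero : ((f.toPreGNS 1 : f.PreGNS) : f.GNS) = 0 := by
      simpa using congr($h0 ((f.toPreGNS 1 : f.PreGNS) : f.GNS))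
    rw [hzero] at hnorm
    simp [hφ.map_one] at hnorm
  rw [← NonUnitalStarAlgHom.norm_map f.gnsStarAlgHom (injective_of_forall_isClosed_ideal hA hone) a]
  exact norm_gnsStarAlgHom_le f hM hs h

end SimpleCstarAlgebra

section HahnBanach

variable {M E : Type*} [AddCommGroup M] [Module ℂ M] [NormedAddCommGroup E] [NormedSpace ℂ E]

theorem exists_strongDual_comp_eq_of_norm_le (L : M →ₗ[ℂ] E) (f : M →ₗ[ℂ] ℂ)
    (h : ∀ x, ‖f x‖ ≤ ‖L x‖) :
    ∃ F : StrongDual ℂ E, (∀ x, F (L x) = f x) ∧ ∀ b, ‖F b‖ ≤ ‖b‖ := by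
  have hker : f ∈ L.ker.dualAnnihilator := (Submodule.mem_dualAnnihilator f).2 fun x hx =>
    norm_le_zero_iff.1 <| (h x).trans_eq <| by rw [LinearMap.mem_ker.1 hx, norm_zero]
  rw [← LinearMap.range_dualMap_eq_dualAnnihilator_ker] at hker
  obtain ⟨F₀, rfl⟩ := hker
  obtain ⟨F, hF, hnorm⟩ := exists_extension_norm_eq L.range
    ((F₀.domRestrict L.range).mkContinuous 1 <| by
      rintro ⟨_, x, rfl⟩
      simpa using h x)
  have hF1 : ‖F‖ ≤ 1 := hnorm.trans_le (LinearMap.mkContinuous_norm_le _ zero_le_one _)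
  exact ⟨F, fun x => hF ⟨L x, x, rfl⟩, fun b => by simpa using F.le_of_opNorm_le hF1 b⟩

end HahnBanach

section ReducedAlgebra

theorem isClosed_redCstar : IsClosed (redCstar G : Set (OpL2 G)) := by
  unfold redCstar
  exact StarSubalgebra.isClosed_topologicalClosure _

theorem coe_uu (g : G) : (uu g : OpL2 G) = permRep G G g := by
  rw [permRep_self]
  unfold uu
  rfl

attribute [local instance] isClosed_redCstar

theorem star_permRep {T : Type*} [MulAction G T] (g : G) :
    star (permRep G T g : OpL2 T) = permRep G T g⁻¹ := by
  rw [map_inv]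
  rfl

variable (G) in
/-- The left regular representation as a unitary representation inside `C*_λ(G)`. -/
def uuRep : G →* unitary (redCstar G) :=
  MonoidHom.mk' (fun g => ⟨uu g, by
    rw [Unitary.mem_iff]
    constructor <;> apply Subtype.ext <;> simp [coe_uu]⟩) fun g h => by
    apply Subtype.ext; apply Subtype.ext; simp [coe_uu]

theorem coe_uuRep (g : G) : (uuRep G g : redCstar G) = uu g := rfl

variable {B : Type*} [CStarAlgebra B]

/-- The extension of a unitary representation of `G` to the group algebra `ℂ[G]`. -/
def groupAlgebraRep (U : G →* unitary B) : MonoidAlgebra ℂ G →ₐ[ℂ] B :=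
  MonoidAlgebra.lift ℂ B G ((unitary B).subtype.comp U)

theorem groupAlgebraRep_single (U : G →* unitary B) (g : G) (c : ℂ) :
    groupAlgebraRep U (.single g c) = c • (U g : B) :=
  MonoidAlgebra.lift_single _ _ _

theorem coe_adjoin_range_lreg :
    (StarAlgebra.adjoin ℂ (Set.range (lreg (G := G))) : Set (OpL2 G)) =
      Submodule.span ℂ (Set.range (lreg (G := G))) := by
  have hrange : Set.range (lreg (G := G)) =
      MonoidHom.mrange ((unitary (OpL2 G)).subtype.comp (permRep G G)) :=
    congrArg Set.range (funext fun g => (permRep_self g).symm)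
  have hstar : star (Set.range (lreg (G := G))) = Set.range lreg := by
    rw [← Set.image_star, ← Set.range_comp, ← (Equiv.inv G).surjective.range_comp lreg]
    exact congrArg Set.range (funext fun g => by
      simp only [Function.comp_apply, Equiv.inv_apply, ← permRep_self, star_permRep])
  have hspan := StarAlgebra.adjoin_eq_span (R := ℂ) (Set.range (lreg (G := G)))
  rw [hstar, Set.union_self, hrange, Submonoid.closure_eq, ← hrange] at hspan
  exact congrArg SetLike.coe hspan

theorem dense_span_range_uu :
    Dense (Submodule.span ℂ (Set.range (uu (G := G))) : Set (redCstar G)) := by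
  let ι : redCstar G →ₗ[ℂ] OpL2 G := (redCstar G).subtype.toAlgHom.toLinearMap
  have himage : ι '' (Submodule.span ℂ (Set.range (uu (G := G)))) =
      StarAlgebra.adjoin ℂ (Set.range (lreg (G := G))) := by
    have hcomp : ι ∘ uu = lreg (G := G) := funext fun g => (coe_uu g).trans (permRep_self g)
    rw [coe_adjoin_range_lreg, ← Submodule.map_coe, Submodule.map_span, ← Set.range_comp, hcomp]
  intro a
  have hι : Topology.IsInducing ι := Topology.IsInducing.subtypeVal
  rw [hι.closure_eq_preimage_closure_image, himage]
  have ha := a.2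
  unfold redCstar at ha
  exact ha

theorem redCstar_clm_ext {E : Type*} [TopologicalSpace E] [T2Space E] [AddCommMonoid E] [Module ℂ E]
    {F₁ F₂ : redCstar G →L[ℂ] E} (h : ∀ g, F₁ (uu g) = F₂ (uu g)) : F₁ = F₂ :=
  ContinuousLinearMap.ext_on dense_span_range_uu (Set.forall_mem_range.2 h)

theorem denseRange_groupAlgebraRep : DenseRange (groupAlgebraRep (uuRep G)) := by
  refine dense_span_range_uu.mono ?_
  have hle : Submodule.span ℂ (Set.range (uu (G := G))) ≤
      (groupAlgebraRep (uuRep G)).toLinearMap.range :=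
    Submodule.span_le.2 <| Set.range_subset_iff.2 fun g =>
      ⟨.single g 1, (groupAlgebraRep_single _ g 1).trans (one_smul _ _)⟩
  exact hle

open Classical in
theorem apply_star_groupAlgebraRep_mul {U : G →* unitary B} {H : Subgroup G} {ω : WeakDual ℂ B}
    (hH : ∀ g, ω (U g) = if g ∈ H then 1 else 0) (x z : MonoidAlgebra ℂ G) :
    ω (star (groupAlgebraRep U x) * groupAlgebraRep U z) =
      inner ℂ (groupAlgebraRep (permRep G (G ⧸ H)) x (stdBasis _ (1 : G)))
        (groupAlgebraRep (permRep G (G ⧸ H)) z (stdBasis _ (1 : G))) := by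
  induction x using MonoidAlgebra.induction_linear with
  | zero => simp
  | add x y hx hy =>
    rw [map_add, map_add, star_add, add_mul, map_add, hx, hy, add_apply, inner_add_left]
  | single g c =>
    induction z using MonoidAlgebra.induction_linear with
    | zero => simp
    | add x y hx hy =>
      rw [map_add, map_add, mul_add, map_add, hx, hy, add_apply, inner_add_right]
    | single h d =>
      have hU : star (U g : B) * U h = U (g⁻¹ * h) := by
        rw [map_mul, map_inv, ← Unitary.star_eq_inv]
        rfl
      have hiff : g • ((1 : G) : G ⧸ H) = h • ((1 : G) : G ⧸ H) ↔ g⁻¹ * h ∈ H := by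
        rw [MulAction.Quotient.smul_coe, MulAction.Quotient.smul_coe, smul_eq_mul, smul_eq_mul,
          mul_one, mul_one]
        exact QuotientGroup.eq
      simp only [groupAlgebraRep_single, star_smul, smul_mul_smul_comm, hU, map_smul, hH,
        smul_apply, inner_smul_left, inner_smul_right, permRep_stdBasis, inner_stdBasis,
        stdBasis_apply, hiff, smul_eq_mul]
      rw [mul_assoc, mul_left_comm]
      rfl

/-- By simplicity the GNS representation of `ω`, which is the quasi-regular representation of
`G` on `ℓ²(G/H)`, is isometric on `C*_λ(G)`. -/
theorem norm_groupAlgebraRep_le (hs : IsCstarSimple G) {H : Subgroup G}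
    {ω : WeakDual ℂ (redCstar G)} (hω : IsState ω)
    (hH : ∀ g, ω (uu g) = open Classical in if g ∈ H then 1 else 0) (x : MonoidAlgebra ℂ G) :
    ‖groupAlgebraRep (uuRep G) x‖ ≤ ‖groupAlgebraRep (permRep G (G ⧸ H)) x‖ := by
  classical
  refine hω.norm_le_of_forall_isClosed_ideal hs (norm_nonneg _) denseRange_groupAlgebraRep ?_
  rintro _ ⟨z, rfl⟩
  have hsq (z : MonoidAlgebra ℂ G) :
      (ω (star (groupAlgebraRep (uuRep G) z) * groupAlgebraRep (uuRep G) z)).re =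
        ‖groupAlgebraRep (permRep G (G ⧸ H)) z (stdBasis _ (1 : G))‖ ^ 2 := by
    rw [apply_star_groupAlgebraRep_mul hH]
    exact inner_self_eq_norm_sq (𝕜 := ℂ) _
  rw [← map_mul, hsq, hsq, ← mul_pow, map_mul]
  gcongr
  exact (groupAlgebraRep (permRep G (G ⧸ H)) x).le_opNorm _

variable (G) in
/-- The canonical trace of `C*_λ(G)` as a point of the weak-⋆ dual. -/
def traceState : WeakDual ℂ (redCstar G) :=
  weakDualMap (starAlgHomCLM (redCstar G).subtype) (vectorFunctional (stdBasis G 1))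

theorem traceState_apply (a : redCstar G) : traceState G a = tauF G a := by
  unfold tauF
  rw [deltaOne_eq_stdBasis]
  rfl

theorem isState_traceState : IsState (traceState G) :=
  (isState_vectorFunctional ((stdBasis G).orthonormal.1 1)).comp_starAlgHom _

open Classical in
theorem traceState_uu (g : G) : traceState G (uu g) = if g = 1 then 1 else 0 := by
  change inner ℂ (stdBasis G 1) ((uu g : OpL2 G) (stdBasis G 1)) = _
  rw [coe_uu, permRep_stdBasis, inner_stdBasis, stdBasis_apply, smul_eq_mul, mul_one]
  simp only [eq_comm]

open Classical in
variable (G) in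
/-- The states of `B(ℓ²(T))` that restrict to the canonical character of `G`. -/
def traceExtensions (T : Type*) [MulAction G T] : Set (WeakDual ℂ (OpL2 T)) :=
  {ρ | IsState ρ ∧ ∀ g : G, ρ (permRep G T g : OpL2 T) = if g = 1 then 1 else 0}

theorem nonempty_traceExtensions (hs : IsCstarSimple G) {H : Subgroup G}
    {ω : WeakDual ℂ (redCstar G)} (hω : IsState ω)
    (hH : ∀ g, ω (uu g) = open Classical in if g ∈ H then 1 else 0) :
    (traceExtensions G (G ⧸ H)).Nonempty := by
  obtain ⟨F, hF, hnorm⟩ := exists_strongDual_comp_eq_of_norm_le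
    (groupAlgebraRep (permRep G (G ⧸ H))).toLinearMap
    ((WeakDual.toStrongDual (traceState G)).toLinearMap ∘ₗ (groupAlgebraRep (uuRep G)).toLinearMap)
    fun x => (isState_traceState.norm_apply_le _).trans (norm_groupAlgebraRep_le hs hω hH x)
  have hFg (g : G) : F (permRep G (G ⧸ H) g : OpL2 (G ⧸ H)) = traceState G (uu g) := by
    simpa [groupAlgebraRep_single, coe_uuRep] using hF (.single g 1)
  refine ⟨StrongDual.toWeakDual F, .of_norm_le ?_ hnorm, fun g => (hFg g).trans (traceState_uu g)⟩
  simpa [traceState_uu] using hFg 1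

theorem isInvariantStateSet_traceExtensions {T : Type*} [MulAction G T]
    (hne : (traceExtensions G T).Nonempty) :
    IsInvariantStateSet (permAut G T) (traceExtensions G T) where
  nonempty := hne
  subset_stateSpace _ hρ := hρ.1
  isClosed := by
    simp only [traceExtensions, Set.ofPred_and, Set.ofPred_forall]
    exact isClosed_stateSpace.inter <| isClosed_iInter fun g =>
      isClosed_eq (WeakDual.eval_continuous _) continuous_const
  convex φ hφ ψ hψ a b ha hb hab := by
    refine ⟨convex_stateSpace hφ.1 hψ.1 ha hb hab, fun g => ?_⟩
    change a • φ _ + b • ψ _ = _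
    rw [hφ.2, hψ.2, ← add_smul, hab, one_smul]
  map_mem g φ hφ := by
    refine ⟨hφ.1.comp_starAlgHom _, fun t => ?_⟩
    have hconj : permAut G T g⁻¹ (permRep G T t) = permRep G T (g⁻¹ * t * g) := by
      simp only [permAut_apply, inv_inv, map_mul, Submonoid.coe_mul]
    have hiff : g⁻¹ * t * g = 1 ↔ t = 1 := by rw [mul_assoc, inv_mul_eq_one, eq_comm, mul_eq_right]
    rw [dualAut_apply, hconj, hφ.2]
    classical
    exact if_congr hiff rfl rfl

end ReducedAlgebra

section Stabilizer

variable {B T : Type*} [CStarAlgebra B] {α : G →* (B ≃⋆ₐ[ℂ] B)}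

/-- The stabilizer of a functional under the dual of an action on a C⋆-algebra. -/
def dualStabilizer (α : G →* (B ≃⋆ₐ[ℂ] B)) (y : WeakDual ℂ B) : Subgroup G :=
  letI := MulAction.compHom (WeakDual ℂ B) (dualAut α)
  MulAction.stabilizer G y

theorem mem_dualStabilizer {y : WeakDual ℂ B} {g : G} :
    g ∈ dualStabilizer α y ↔ dualAut α g y = y := Iff.rfl

/-- The embedding of `G ⧸ dualStabilizer α y` onto the orbit of `y`. -/
def orbitMap (α : G →* (B ≃⋆ₐ[ℂ] B)) (y : WeakDual ℂ B) :
    G ⧸ dualStabilizer α y → WeakDual ℂ B :=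
  letI := MulAction.compHom (WeakDual ℂ B) (dualAut α)
  MulAction.ofQuotientStabilizer G y

theorem orbitMap_smul (y : WeakDual ℂ B) (g : G) (t : G ⧸ dualStabilizer α y) :
    orbitMap α y (g • t) = dualAut α g (orbitMap α y t) :=
  letI := MulAction.compHom (WeakDual ℂ B) (dualAut α)
  MulAction.ofQuotientStabilizer_smul G y g t

theorem orbitMap_injective (y : WeakDual ℂ B) : Function.Injective (orbitMap α y) :=
  letI := MulAction.compHom (WeakDual ℂ B) (dualAut α)
  MulAction.injective_ofQuotientStabilizer G y

theorem mem_fixedBy_iff_dualAut_orbitMap {y : WeakDual ℂ B} {g : G}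
    {t : G ⧸ dualStabilizer α y} :
    t ∈ MulAction.fixedBy _ g ↔ dualAut α g (orbitMap α y t) = orbitMap α y t := by
  rw [← orbitMap_smul, (orbitMap_injective y).eq_iff, MulAction.mem_fixedBy]

/-- The indicator function of a set, as a bounded function. -/
def lpIndicator (A : Set T) : ℓ^∞(T, ℂ) :=
  ⟨A.indicator 1, memℓp_infty ⟨1, by
    rintro _ ⟨t, rfl⟩
    exact (norm_indicator_le_norm_self 1 t).trans_eq norm_one⟩⟩

@[simp]
theorem lpIndicator_apply (A : Set T) (t : T) : lpIndicator A t = A.indicator 1 t := rfl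

theorem lpIndicator_nonneg (A : Set T) (t : T) : 0 ≤ lpIndicator A t :=
  Set.indicator_nonneg (fun _ _ => zero_le_one) t

theorem star_lpIndicator_mul_self (A : Set T) :
    star (lpIndicator A) * lpIndicator A = lpIndicator A := by
  refine lp.ext <| funext fun t => ?_
  by_cases ht : t ∈ A <;> simp [ht]

theorem exists_mem_apply_eq_zero_of_dualAut_ne [MulAction G T] {Q : Set (WeakDual ℂ B)}
    (hQ : Minimal (IsInvariantStateSet α) Q) {y : WeakDual ℂ B} (hy : y ∈ Q.extremePoints ℝ)
    {q : T → WeakDual ℂ B} (hqQ : ∀ t, q t ∈ Q)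
    (hqα : ∀ (g : G) t, q (g • t) = dualAut α g (q t)) {S : Set (WeakDual ℂ (OpL2 T))}
    (hS : IsInvariantStateSet (permAut G T) S) :
    ∃ ω ∈ S, ∀ r, dualAut α r y ≠ y → ω (permRep G T r : OpL2 T) = 0 ∧
      ω (mulOp T (lpIndicator (MulAction.fixedBy T r))) = 0 := by
  have hq (t : T) : IsState (q t) := hQ.prop.subset_stateSpace (hqQ t)
  obtain ⟨ω, hω, hmul, hright, hleft⟩ := exists_state_multiplicative_on_range hQ
    (fun ν hν => hν.weakDualMap_poissonMap_mem hQ.prop.convex hQ.prop.isClosed hq hqQ)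
    (mulOp T) (fun g b => by rw [poissonMap_map hq hqα, mulOp_lpPerm]) hS hy
  have hcancel {r : G} (hr : dualAut α r y ≠ y) {c : ℂ} (hc : ∀ b, c * y b = c * y (α r b)) :
      c = 0 := by
    by_contra hc0
    refine hr ?_
    have hinv : dualAut α r⁻¹ y = y := DFunLike.ext _ _ fun b => by
      rw [dualAut_apply, inv_inv, mul_left_cancel₀ hc0 (hc b)]
    conv_lhs => rw [← hinv]
    rw [← LinearEquiv.mul_apply, ← map_mul, mul_inv_cancel, map_one, LinearEquiv.coe_one, id]
  refine ⟨ω, hω, fun r hr => ⟨hcancel hr fun b => ?_, hcancel hr fun b => ?_⟩⟩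
  · rw [← hright, permRep_mul, ← mulOp_lpPerm, ← poissonMap_map hq hqα, hleft, mul_comm]
  · rw [← hmul, ← hmul]
    congr 2
    refine lp.ext <| funext fun t => ?_
    by_cases ht : t ∈ MulAction.fixedBy T r
    · have hqt : q t b = q t (α r b) := by
        conv_rhs => rw [← MulAction.mem_fixedBy.1 ht, hqα, dualAut_apply, ← StarAlgEquiv.mul_apply,
          ← map_mul, inv_mul_cancel, map_one, StarAlgEquiv.one_apply]
      simp [hqt]
    · simp [ht]

attribute [local instance] isClosed_redCstar

theorem nonempty_traceExtensions_dualStabilizer (hs : IsCstarSimple G) {y : WeakDual ℂ (OpL2 G)}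
    (hy : IsState y) : (traceExtensions G (G ⧸ dualStabilizer (permAut G G) y)).Nonempty := by
  obtain ⟨ω, hω, hH⟩ := exists_isState_apply_permRep_eq_ite (hy.comp_starAlgHom (mulOp G))
    (H := dualStabilizer (permAut G G) y) fun h f => by
      have hinv := congr($(mem_dualStabilizer.1 (inv_mem h.2)) (mulOp G f))
      rwa [dualAut_apply, inv_inv, ← mulOp_lpPerm] at hinv
  exact nonempty_traceExtensions hs (hω.comp_starAlgHom (redCstar G).subtype) fun g =>
    (congrArg ω (coe_uu g)).trans (hH g)

theorem IsState.apply_lpIndicator_eq_one {μ : WeakDual ℂ ℓ^∞(T, ℂ)} (hμ : IsState μ) {ι : Type*}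
    {R : Finset ι} {V : ι → Set T} (hV : ∀ r ∈ R, μ (lpIndicator (V r)) = 0) {A : Set T}
    (hcover : ∀ t ∉ A, ∃ r ∈ R, t ∈ V r) : μ (lpIndicator A) = 1 := by
  have hle : 0 ≤ μ (1 - lpIndicator A) := hμ.apply_nonneg_of_forall_nonneg fun t =>
    sub_nonneg.2 (Set.indicator_le_self' (fun _ _ => zero_le_one) t)
  have hge : 0 ≤ μ (lpIndicator A + ∑ r ∈ R, lpIndicator (V r) - 1) :=
    hμ.apply_nonneg_of_forall_nonneg fun t => by
      rw [lp.coeFn_sub, lp.coeFn_add, lp.coeFn_sum, Pi.sub_apply, Pi.add_apply, Finset.sum_apply,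
        lp.infty_coeFn_one, Pi.one_apply, sub_nonneg]
      by_cases ht : t ∈ A
      · simpa [ht] using Finset.sum_nonneg fun r _ => lpIndicator_nonneg (V r) t
      · obtain ⟨r, hr, htr⟩ := hcover t ht
        simpa [ht, htr] using
          Finset.single_le_sum (fun r _ => lpIndicator_nonneg (V r) t) hr
  rw [map_sub, hμ.map_one, sub_nonneg] at hle
  rw [map_sub, map_add, map_sum, Finset.sum_eq_zero hV, add_zero, hμ.map_one, sub_nonneg] at hge
  exact le_antisymm hle hge

theorem permRep_mul_mulOp_lpIndicator_fixedBy [MulAction G T] (g : G) :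
    permRep G T g * mulOp T (lpIndicator (MulAction.fixedBy T g)) =
      mulOp T (lpIndicator (MulAction.fixedBy T g)) := by
  refine OpL2.ext fun ξ t => ?_
  rw [mul_apply_eq_comp, permRep_apply, mulOp_apply, mulOp_apply, lpIndicator_apply,
    lpIndicator_apply]
  by_cases ht : t ∈ MulAction.fixedBy T g
  · rw [inv_smul_eq_iff.2 (MulAction.mem_fixedBy.1 ht).symm]
  · have ht' : g⁻¹ • t ∉ MulAction.fixedBy T g := by
      rwa [MulAction.mem_fixedBy, smul_inv_smul, eq_comm, inv_smul_eq_iff, eq_comm]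
    simp [ht, ht']

open Classical in
theorem exists_mem_fixedBy_of_card_le {y : WeakDual ℂ B} {F : Finset G} {t : G} (htF : t ∈ F)
    (hty : t ∈ dualStabilizer α y) {s : G ⧸ dualStabilizer α y}
    (hcard : {r ∈ F | r ∈ dualStabilizer α y}.card ≤
      {r ∈ F | r ∈ dualStabilizer α (orbitMap α y s)}.card)
    (hs : s ∉ MulAction.fixedBy _ t) :
    ∃ r ∈ {r ∈ F | r ∉ dualStabilizer α y}, s ∈ MulAction.fixedBy _ r := by
  by_contra! hno
  refine hcard.not_gt (Finset.card_lt_card ((Finset.ssubset_iff_of_subset ?_).2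
    ⟨t, Finset.mem_filter.2 ⟨htF, hty⟩, fun h => hs ?_⟩))
  · intro r hr
    rw [Finset.mem_filter] at hr ⊢
    refine ⟨hr.1, by_contra fun hry => hno r (Finset.mem_filter.2 ⟨hr.1, hry⟩) ?_⟩
    exact mem_fixedBy_iff_dualAut_orbitMap.2 hr.2
  · exact mem_fixedBy_iff_dualAut_orbitMap.2 (Finset.mem_filter.1 h).2

open Classical in
theorem notMem_dualStabilizer_of_card_le (hs : IsCstarSimple G) {Q : Set (WeakDual ℂ (OpL2 G))}
    (hQ : Minimal (IsInvariantStateSet (permAut G G)) Q) {y : WeakDual ℂ (OpL2 G)}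
    (hy : y ∈ Q.extremePoints ℝ) {F : Finset G}
    (hcard : ∀ z ∈ Q.extremePoints ℝ, {t ∈ F | t ∈ dualStabilizer (permAut G G) y}.card ≤
      {t ∈ F | t ∈ dualStabilizer (permAut G G) z}.card) {t : G} (htF : t ∈ F) (ht : t ≠ 1) :
    t ∉ dualStabilizer (permAut G G) y := by
  intro hty
  have horbit (s) : orbitMap (permAut G G) y s ∈ Q.extremePoints ℝ :=
    QuotientGroup.induction_on s fun g => hQ.prop.map_mem_extremePoints g hy
  have hne := nonempty_traceExtensions_dualStabilizer hs
    (hQ.prop.subset_stateSpace (extremePoints_subset hy))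
  obtain ⟨ω, hω, hω0⟩ := exists_mem_apply_eq_zero_of_dualAut_ne hQ hy
    (fun s => extremePoints_subset (horbit s)) (orbitMap_smul y)
    (isInvariantStateSet_traceExtensions hne)
  -- By minimality of `y`, the `ω`-null sets `fixedBy r` with `r ∈ F` moving `y` cover the
  -- complement of `fixedBy t`, so `ω` is concentrated on `fixedBy t`, where `t` acts trivially.
  set x := mulOp _ (lpIndicator (MulAction.fixedBy (G ⧸ dualStabilizer (permAut G G) y) t)) with hx
  have hωx : ω x = 1 := (hω.1.comp_starAlgHom (mulOp _)).apply_lpIndicator_eq_one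
    (fun r hr => (hω0 r (Finset.mem_filter.1 hr).2).2)
    fun s => exists_mem_fixedBy_of_card_le htF hty (hcard _ (horbit s))
  have hidem : ω (star x * x) = star (ω x) * ω x := by
    rw [hx, ← map_star, ← map_mul, star_lpIndicator_mul_self, ← hx, hωx, star_one, mul_one]
  have hmul := hω.1.apply_mul_of_apply_star_mul_self hidem
    (permRep G (G ⧸ dualStabilizer (permAut G G) y) t : OpL2 _)
  rw [permRep_mul_mulOp_lpIndicator_fixedBy, hωx, hω.2, if_neg ht, zero_mul] at hmul
  exact one_ne_zero hmul

theorem exists_mem_apply_permRep_eq_zero (hs : IsCstarSimple G) {S : Set (WeakDual ℂ (OpL2 G))}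
    (hS : IsInvariantStateSet (permAut G G) S) (F : Finset G) :
    ∃ ω ∈ S, ∀ t ∈ F, t ≠ 1 → ω (permRep G G t : OpL2 G) = 0 := by
  classical
  obtain ⟨Q, hQ⟩ := (isInvariantStateSet_stateSpace (permAut G G)).exists_minimal
  have hne := hQ.prop.isCompact.extremePoints_nonempty hQ.prop.nonempty
  let N (y : WeakDual ℂ (OpL2 G)) : ℕ := {t ∈ F | t ∈ dualStabilizer (permAut G G) y}.card
  have hy : Function.argminOn N _ hne ∈ Q.extremePoints ℝ := Function.argminOn_mem N _ hne
  have hyQ := extremePoints_subset hy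
  obtain ⟨ω, hω, hω0⟩ := exists_mem_apply_eq_zero_of_dualAut_ne hQ hy
    (fun g => hQ.prop.map_mem g hyQ) (fun g h => by simp) hS
  exact ⟨ω, hω, fun t htF ht => (hω0 t (notMem_dualStabilizer_of_card_le hs hQ hy
    (fun z hz => Function.argminOn_le N _ hz) htF ht)).1⟩

end Stabilizer

section Averaging

variable {B : Type*} [CStarAlgebra B]

theorem norm_le_of_le_algebraMap_of_neg_le [PartialOrder B] [StarOrderedRing B] {b : B} {r : ℝ}
    (hb : IsSelfAdjoint b) (hr : 0 ≤ r) (hle : b ≤ algebraMap ℝ B r)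
    (hneg : -b ≤ algebraMap ℝ B r) : ‖b‖ ≤ r := by
  cases subsingleton_or_nontrivial B
  · rwa [Subsingleton.elim b 0, norm_zero]
  rcases CStarAlgebra.norm_or_neg_norm_mem_spectrum hb with h | h
  · exact (le_algebraMap_iff_spectrum_le hb).1 hle _ h
  · exact (le_algebraMap_iff_spectrum_le hb.neg).1 hneg _ (by
      rwa [← spectrum.neg_eq, Set.mem_neg])

theorem exists_isState_apply_eq [PartialOrder B] [StarOrderedRing B] {f : StrongDual ℝ B}
    (hone : f 1 = 1) (hpos : ∀ b, 0 ≤ b → 0 ≤ f b) :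
    ∃ φ : WeakDual ℂ B, IsState φ ∧ ∀ b, IsSelfAdjoint b → φ b = f b := by
  let F : StrongDual ℂ B := StrongDual.extendRCLike
    (f.comp ((selfAdjoint.submodule ℝ B).subtypeL.comp (selfAdjointPartL ℝ B)))
  have hF (b : B) (hb : IsSelfAdjoint b) : F b = f b := by
    have hb_re : ((selfAdjointPartL ℝ B b : selfAdjoint B) : B) = b :=
      hb.coe_selfAdjointPart_apply ℝ
    have hb_im : ((selfAdjointPartL ℝ B (Complex.I • b) : selfAdjoint B) : B) = 0 := by
      simp [selfAdjointPartL, hb.star_eq]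
    rw [StrongDual.extendRCLike_apply]
    change (f (selfAdjointPartL ℝ B b : selfAdjoint B) : ℂ) -
      Complex.I * f (selfAdjointPartL ℝ B (Complex.I • b) : selfAdjoint B) = f b
    rw [hb_re, hb_im, map_zero, Complex.ofReal_zero, mul_zero, sub_zero]
  refine ⟨StrongDual.toWeakDual F, ⟨?_, fun b => ?_⟩, hF⟩
  · exact (hF 1 (.one B)).trans (by simp [hone])
  · exact (Complex.zero_le_real.2 (hpos _ (star_mul_self_nonneg b))).trans_eq
      (hF _ (.star_mul_self b)).symm

theorem exists_strongDual_pos_of_forall_not_le [PartialOrder B] [StarOrderedRing B] {K : Set B}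
    (hconv : Convex ℝ K) (hsa : ∀ k ∈ K, IsSelfAdjoint k) {ε : ℝ} (hε : 0 < ε)
    (hK : ∀ k ∈ K, ¬ k ≤ algebraMap ℝ B ε) :
    ∃ (f : StrongDual ℝ B) (u : ℝ), 0 < u ∧ (∀ b, 0 ≤ b → 0 ≤ f b) ∧ ∀ k ∈ K, u ≤ f k := by
  have hdisj : Disjoint (Metric.thickening ε (Set.Iic (0 : B))) K := by
    refine Set.disjoint_left.2 fun k hk hkK => hK k hkK ?_
    obtain ⟨n, hn, hkn⟩ := Metric.mem_thickening_iff.1 hk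
    have hn_sa : IsSelfAdjoint n := by simpa using (IsSelfAdjoint.of_nonneg (neg_nonneg.2 hn)).neg
    calc k ≤ k - n := le_sub_self_iff k |>.2 hn
      _ ≤ algebraMap ℝ B ‖k - n‖ := ((hsa k hkK).sub hn_sa).le_algebraMap_norm_self
      _ ≤ algebraMap ℝ B ε := algebraMap_mono B (dist_eq_norm k n ▸ hkn.le)
  obtain ⟨f, u, hlt, hle⟩ := geometric_hahn_banach_open ((convex_Iic (0 : B)).thickening ε)
    Metric.isOpen_thickening hconv hdisj
  have hlt_of_nonpos {b : B} (hb : b ≤ 0) : f b < u :=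
    hlt b (Metric.self_subset_thickening hε _ hb)
  have hu : 0 < u := by simpa using hlt_of_nonpos le_rfl
  refine ⟨f, u, hu, fun b hb => ?_, hle⟩
  by_contra! hfb
  have h := hlt_of_nonpos (smul_nonpos_of_nonpos_of_nonneg (div_neg_of_pos_of_neg hu hfb).le hb)
  rw [map_smul, smul_eq_mul, div_mul_cancel₀ _ hfb.ne] at h
  exact h.false

theorem exists_isState_le_re_apply [PartialOrder B] [StarOrderedRing B] {K : Set B}
    (hconv : Convex ℝ K) (hne : K.Nonempty) (hsa : ∀ k ∈ K, IsSelfAdjoint k) {ε : ℝ} (hε : 0 < ε)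
    (hK : ∀ k ∈ K, ¬ k ≤ algebraMap ℝ B ε) :
    ∃ φ : WeakDual ℂ B, IsState φ ∧ ∃ δ > 0, ∀ k ∈ K, δ ≤ (φ k).re := by
  obtain ⟨f, u, hu, hpos, hle⟩ := exists_strongDual_pos_of_forall_not_le hconv hsa hε hK
  obtain ⟨k₀, hk₀⟩ := hne
  have hf1 : 0 < f 1 := by
    have hk₀_le : f k₀ ≤ ‖k₀‖ * f 1 := by
      simpa [Algebra.algebraMap_eq_smul_one] using
        hpos _ (sub_nonneg.2 (hsa k₀ hk₀).le_algebraMap_norm_self)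
    exact pos_of_mul_pos_right ((hu.trans_le (hle k₀ hk₀)).trans_le hk₀_le) (norm_nonneg _)
  obtain ⟨φ, hφ, hφf⟩ := exists_isState_apply_eq (f := (f 1)⁻¹ • f) (by simp [hf1.ne'])
    fun b hb => smul_nonneg (inv_nonneg.2 hf1.le) (hpos b hb)
  refine ⟨φ, hφ, (f 1)⁻¹ * u, by positivity, fun k hk => ?_⟩
  rw [hφf k (hsa k hk), Complex.ofReal_re, smul_apply, smul_eq_mul]
  gcongr
  exact hle k hk

variable {α : G →* (B ≃⋆ₐ[ℂ] B)} {τ : WeakDual ℂ B}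

/-- The convex combinations of the automorphisms of an action, as bounded operators. -/
def averages (α : G →* (B ≃⋆ₐ[ℂ] B)) : Set (B →L[ℂ] B) :=
  convexHull ℝ (Set.range fun g => starAlgHomCLM (α g : B →⋆ₐ[ℂ] B))

theorem apply_mem_of_mem_averages {P : B →L[ℂ] B} (hP : P ∈ averages α) {C : Set B}
    (hC : Convex ℝ C) {b : B} (hb : ∀ g, α g b ∈ C) : P b ∈ C :=
  convexHull_min (t := {P : B →L[ℂ] B | P b ∈ C}) (Set.range_subset_iff.2 hb)
    (fun _ hP _ hQ _ _ hr ht hrt => hC hP hQ hr ht hrt) hP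

theorem isSelfAdjoint_apply_of_mem_averages {P : B →L[ℂ] B} (hP : P ∈ averages α) {b : B}
    (hb : IsSelfAdjoint b) : IsSelfAdjoint (P b) :=
  apply_mem_of_mem_averages hP (selfAdjoint.submodule ℝ B).convex fun g => hb.map (α g)

theorem one_mem_averages : (1 : B →L[ℂ] B) ∈ averages α :=
  subset_convexHull ℝ _ ⟨1, ContinuousLinearMap.ext fun b => by simp⟩

theorem mul_mem_averages {P Q : B →L[ℂ] B} (hP : P ∈ averages α) (hQ : Q ∈ averages α) :
    P * Q ∈ averages α := by
  have hconv : Convex ℝ (averages α) := convex_convexHull ℝ _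
  have hleft (R : B →L[ℂ] B) : IsLinearMap ℝ fun Q : B →L[ℂ] B => R * Q :=
    ⟨mul_add R, fun r Q => ContinuousLinearMap.ext fun b => R.map_smul_of_tower r (Q b)⟩
  have hright : IsLinearMap ℝ fun P : B →L[ℂ] B => P * Q :=
    ⟨fun P R => add_mul P R Q, fun _ _ => rfl⟩
  refine convexHull_min (Set.range_subset_iff.2 fun g => ?_) (hconv.is_linear_preimage hright) hP
  refine convexHull_min (Set.range_subset_iff.2 fun h => ?_)
    (hconv.is_linear_preimage (hleft (starAlgHomCLM (α g : B →⋆ₐ[ℂ] B)))) hQ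
  exact subset_convexHull ℝ _ ⟨g * h, ContinuousLinearMap.ext fun b => by simp⟩

theorem exists_mem_averages_apply_le [PartialOrder B] [StarOrderedRing B]
    (hτ : ∀ S, IsInvariantStateSet α S → τ ∈ S) {b : B} (hb : IsSelfAdjoint b) (hb0 : τ b = 0)
    {ε : ℝ} (hε : 0 < ε) : ∃ P ∈ averages α, P b ≤ algebraMap ℝ B ε := by
  by_contra! hcon
  let K : Set B := (fun P : B →L[ℂ] B => P b) '' averages α
  obtain ⟨φ, hφ, δ, hδ, hle⟩ := exists_isState_le_re_apply (K := K)
    ((convex_convexHull ℝ _).is_linear_image ⟨fun _ _ => rfl, fun _ _ => rfl⟩)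
    ⟨_, 1, one_mem_averages, rfl⟩
    (Set.forall_mem_image.2 fun P hP => isSelfAdjoint_apply_of_mem_averages hP hb) hε
    (Set.forall_mem_image.2 hcon)
  have hS : IsInvariantStateSet α
      (stateSpace B ∩ {ω : WeakDual ℂ B | ∀ g, δ ≤ (ω (α g b)).re}) :=
    { nonempty := ⟨φ, hφ, fun g => hle _ ⟨_, subset_convexHull ℝ _ ⟨g, rfl⟩, rfl⟩⟩
      subset_stateSpace := Set.inter_subset_left
      isClosed := by
        rw [Set.ofPred_forall]
        exact isClosed_stateSpace.inter <| isClosed_iInter fun g =>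
          isClosed_le continuous_const (Complex.continuous_re.comp (WeakDual.eval_continuous _))
      convex := convex_stateSpace.inter fun ω hω ρ hρ r t hr ht hrt g => by
        change δ ≤ (r • ω (α g b) + t • ρ (α g b)).re
        simpa using convex_Ici δ (hω g) (hρ g) hr ht hrt
      map_mem g ω hω := ⟨hω.1.comp_starAlgHom _, fun h => by simpa using hω.2 (g⁻¹ * h)⟩ }
  have hδ0 : δ ≤ 0 := by simpa [hb0] using (hτ _ hS).2 1
  exact hδ.not_ge hδ0

theorem exists_mem_averages_forall_apply_le [PartialOrder B] [StarOrderedRing B]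
    (hτ : ∀ S, IsInvariantStateSet α S → τ ∈ S) (hinv : ∀ g b, τ (α g b) = τ b) {E : Set B}
    (hE : E.Finite) (hsa : ∀ b ∈ E, IsSelfAdjoint b) (hE0 : ∀ b ∈ E, τ b = 0)
    {ε : ℝ} (hε : 0 < ε) : ∃ P ∈ averages α, ∀ b ∈ E, P b ≤ algebraMap ℝ B ε := by
  induction E, hE using Set.Finite.induction_on with
  | empty => exact ⟨1, one_mem_averages, fun b hb => hb.elim⟩
  | @insert b E _ _ ih =>
    obtain ⟨P, hP, hPE⟩ := ih (fun c hc => hsa c (.inr hc)) fun c hc => hE0 c (.inr hc)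
    have hPb := isSelfAdjoint_apply_of_mem_averages hP (hsa b (.inl rfl))
    have hPb0 : τ (P b) = 0 := apply_mem_of_mem_averages hP
      ((WeakDual.toStrongDual τ).ker.restrictScalars ℝ).convex
      fun g => (hinv g b).trans (hE0 b (.inl rfl))
    obtain ⟨Q, hQ, hQb⟩ := exists_mem_averages_apply_le hτ hPb hPb0 hε
    refine ⟨Q * P, mul_mem_averages hQ hP, Set.forall_mem_insert.2 ⟨hQb, fun c hc => ?_⟩⟩
    refine apply_mem_of_mem_averages hQ (convex_Iic (algebraMap ℝ B ε)) fun g => ?_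
    calc α g (P c) ≤ α g (algebraMap ℝ B ε) := OrderHomClass.mono (α g) (hPE c hc)
      _ = algebraMap ℝ B ε := by simp [Algebra.algebraMap_eq_smul_one, ← Complex.coe_smul]

theorem exists_mem_averages_norm_apply_le (hτstate : IsState τ)
    (hτ : ∀ S, IsInvariantStateSet α S → τ ∈ S) (hinv : ∀ g b, τ (α g b) = τ b)
    {b : B} (hb : τ b = 0) {ε : ℝ} (hε : 0 < ε) :
    ∃ P ∈ averages α, ‖P b‖ ≤ ε := by
  let _ := CStarAlgebra.spectralOrder B
  let _ := CStarAlgebra.spectralOrderedRing B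
  let E : Set B := {↑(realPart b), -↑(realPart b), ↑(imaginaryPart b), -↑(imaginaryPart b)}
  have hre : τ (realPart b : B) = 0 := by
    simp [realPart_apply_coe, ← Complex.coe_smul, hτstate.map_star, hb]
  have him : τ (imaginaryPart b : B) = 0 := by
    simp [imaginaryPart_apply_coe, ← Complex.coe_smul, hτstate.map_star, hb]
  obtain ⟨P, hP, hle⟩ := exists_mem_averages_forall_apply_le hτ hinv (E := E) (Set.toFinite E)
    (by simp [E, IsSelfAdjoint.neg]) (by simp [E, hre, him]) (half_pos hε)
  simp only [E, Set.forall_mem_insert, Set.mem_singleton_iff, forall_eq] at hle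
  have hnorm (c : selfAdjoint B) (hc : P c ≤ algebraMap ℝ B (ε / 2))
      (hc' : P (-c) ≤ algebraMap ℝ B (ε / 2)) : ‖P c‖ ≤ ε / 2 :=
    norm_le_of_le_algebraMap_of_neg_le (isSelfAdjoint_apply_of_mem_averages hP c.2)
      (half_pos hε).le hc (by rwa [← map_neg])
  refine ⟨P, hP, ?_⟩
  calc ‖P b‖ = ‖P (realPart b) + Complex.I • P (imaginaryPart b)‖ := by
        rw [← map_smul, ← map_add, realPart_add_I_smul_imaginaryPart]
    _ ≤ ‖P (realPart b)‖ + ‖Complex.I • P (imaginaryPart b)‖ := norm_add_le _ _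
    _ ≤ ε / 2 + ε / 2 := by
      rw [norm_smul, Complex.norm_I, one_mul]
      exact add_le_add (hnorm _ hle.1 hle.2.1) (hnorm _ hle.2.2.1 hle.2.2.2)
    _ = ε := add_halves ε

end Averaging

section CstarSimplicity

attribute [local instance] isClosed_redCstar

variable (G) in
/-- The action of `G` on `C*_λ(G)` by conjugation. -/
def redAut : G →* (redCstar G ≃⋆ₐ[ℂ] redCstar G) :=
  (Unitary.conjStarAlgAut ℂ (redCstar G)).comp (uuRep G)

theorem redAut_apply (g : G) (a : redCstar G) : redAut G g a = uu g * a * uu g⁻¹ := by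
  change uu g * a * (star (uuRep G g) : unitary (redCstar G)) = _
  rw [Unitary.star_eq_inv, ← map_inv, coe_uuRep]

theorem redAut_uu (g h : G) : redAut G g (uu h) = uu (g * h * g⁻¹) := by
  simp only [redAut_apply, ← coe_uuRep, map_mul, Submonoid.coe_mul]

theorem traceState_redAut (g : G) (a : redCstar G) :
    traceState G (redAut G g a) = traceState G a := by
  have h : (WeakDual.toStrongDual (traceState G)).comp
      (starAlgHomCLM (redAut G g : redCstar G →⋆ₐ[ℂ] redCstar G)) =
        WeakDual.toStrongDual (traceState G) :=
    redCstar_clm_ext fun h => by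
      classical
      change traceState G (redAut G g (uu h)) = traceState G (uu h)
      simp only [redAut_uu, traceState_uu, conj_eq_one_iff]
  exact congr($h a)

variable (G) in
/-- The restriction of functionals from `B(ℓ²(G))` to `C*_λ(G)`. -/
def restrictRedCstar : WeakDual ℂ (OpL2 G) → WeakDual ℂ (redCstar G) :=
  weakDualMap (starAlgHomCLM (redCstar G).subtype)

theorem restrictRedCstar_apply (ρ : WeakDual ℂ (OpL2 G)) (a : redCstar G) :
    restrictRedCstar G ρ a = ρ (a : OpL2 G) := rfl

theorem coe_redAut (g : G) (a : redCstar G) :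
    (redAut G g a : OpL2 G) = permAut G G g (a : OpL2 G) := by
  rw [redAut_apply, permAut_apply, ← coe_uu, ← coe_uu]
  rfl

theorem restrictRedCstar_dualAut (g : G) (ρ : WeakDual ℂ (OpL2 G)) :
    restrictRedCstar G (dualAut (permAut G G) g ρ) =
      dualAut (redAut G) g (restrictRedCstar G ρ) :=
  DFunLike.ext _ _ fun a => by
    rw [dualAut_apply, restrictRedCstar_apply, restrictRedCstar_apply, dualAut_apply, coe_redAut]

theorem IsState.exists_restrictRedCstar_eq {φ : WeakDual ℂ (redCstar G)} (hφ : IsState φ) :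
    ∃ ρ, IsState ρ ∧ restrictRedCstar G ρ = φ := by
  obtain ⟨F, hF, hnorm⟩ := exists_strongDual_comp_eq_of_norm_le
    (redCstar G).subtype.toAlgHom.toLinearMap (WeakDual.toStrongDual φ).toLinearMap
    hφ.norm_apply_le
  exact ⟨StrongDual.toWeakDual F, .of_norm_le ((hF 1).trans hφ.map_one) hnorm,
    DFunLike.ext _ _ hF⟩

theorem isInvariantStateSet_preimage_restrictRedCstar {S : Set (WeakDual ℂ (redCstar G))}
    (hS : IsInvariantStateSet (redAut G) S) :
    IsInvariantStateSet (permAut G G) (stateSpace (OpL2 G) ∩ restrictRedCstar G ⁻¹' S) where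
  nonempty := by
    obtain ⟨φ, hφ⟩ := hS.nonempty
    obtain ⟨ρ, hρ, hρφ⟩ := (hS.subset_stateSpace hφ).exists_restrictRedCstar_eq
    exact ⟨ρ, hρ, by rwa [Set.mem_preimage, hρφ]⟩
  subset_stateSpace := Set.inter_subset_left
  isClosed := isClosed_stateSpace.inter (hS.isClosed.preimage (continuous_weakDualMap _))
  convex ρ hρ σ hσ r t hr ht hrt :=
    ⟨convex_stateSpace hρ.1 hσ.1 hr ht hrt, hS.convex hρ.2 hσ.2 hr ht hrt⟩
  map_mem g ρ hρ := by
    refine ⟨hρ.1.comp_starAlgHom _, ?_⟩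
    rw [Set.mem_preimage, restrictRedCstar_dualAut]
    exact hS.map_mem g hρ.2

theorem traceState_mem_of_isInvariantStateSet (hs : IsCstarSimple G)
    {S : Set (WeakDual ℂ (redCstar G))} (hS : IsInvariantStateSet (redAut G) S) :
    traceState G ∈ S := by
  classical
  obtain ⟨ω, hω, hωuu⟩ := exists_mem_forall_apply_eq hS.isCompact uu
    (fun g => traceState G (uu g)) fun E ε hε => by
      obtain ⟨ρ, hρ, hρ0⟩ := exists_mem_apply_permRep_eq_zero hs
        (isInvariantStateSet_preimage_restrictRedCstar hS) E
      refine ⟨_, hρ.2, fun t ht => ?_⟩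
      suffices ρ (uu t : OpL2 G) = traceState G (uu t) by
        rw [restrictRedCstar_apply, this, sub_self, norm_zero]
        exact hε.le
      rw [coe_uu, traceState_uu]
      split_ifs with h1
      · simpa [h1] using hρ.1.map_one
      · exact hρ0 t ht h1
  have h : WeakDual.toStrongDual ω = WeakDual.toStrongDual (traceState G) := redCstar_clm_ext hωuu
  exact WeakDual.toStrongDual.injective h ▸ hω

theorem exists_mem_convexHull_norm_sub_le (hs : IsCstarSimple G) (a : redCstar G) {ε : ℝ}
    (hε : 0 < ε) :
    ∃ b ∈ convexHull ℝ {b | ∃ g : G, b = uu g * a * uu g⁻¹}, ‖b - tauF G a • 1‖ ≤ ε := by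
  have hτ : traceState G (a - tauF G a • 1) = 0 := by
    rw [map_sub, map_smul, isState_traceState.map_one, traceState_apply, smul_eq_mul, mul_one,
      sub_self]
  obtain ⟨P, hP, hPa⟩ := exists_mem_averages_norm_apply_le isState_traceState
    (fun S => traceState_mem_of_isInvariantStateSet hs) traceState_redAut hτ hε
  have hP1 : P 1 = 1 := apply_mem_of_mem_averages hP (convex_singleton 1) fun g => map_one _
  refine ⟨P a, apply_mem_of_mem_averages hP (convex_convexHull ℝ _) fun g =>
    subset_convexHull ℝ _ ⟨g, redAut_apply g a⟩, ?_⟩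
  rwa [map_sub, map_smul, hP1] at hPa

theorem IsCstarSimple.sInf_norm_eq_zero (hs : IsCstarSimple G) (φ : redCstar G →L[ℂ] ℂ)
    (a : redCstar G) :
    sInf ((fun b => ‖φ b - φ 1 * tauF G a‖) ''
      closure (convexHull ℝ {b : redCstar G | ∃ g : G, b = uu g * a * uu g⁻¹})) = 0 := by
  refine le_antisymm (le_of_forall_pos_le_add fun ε hε => ?_)
    (Real.sInf_nonneg (Set.forall_mem_image.2 fun b _ => norm_nonneg _))
  obtain ⟨b, hb, hle⟩ := exists_mem_convexHull_norm_sub_le hs a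
    (show 0 < ε / (‖φ‖ + 1) by positivity)
  have hbdd : BddBelow ((fun b => ‖φ b - φ 1 * tauF G a‖) ''
      closure (convexHull ℝ {b : redCstar G | ∃ g : G, b = uu g * a * uu g⁻¹})) :=
    ⟨0, Set.forall_mem_image.2 fun b _ => norm_nonneg _⟩
  calc _ ≤ ‖φ b - φ 1 * tauF G a‖ := csInf_le hbdd (Set.mem_image_of_mem _ (subset_closure hb))
    _ = ‖φ (b - tauF G a • 1)‖ := by rw [map_sub, map_smul, smul_eq_mul, mul_comm]
    _ ≤ ‖φ‖ * (ε / (‖φ‖ + 1)) := φ.le_opNorm_of_le hle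
    _ ≤ (‖φ‖ + 1) * (ε / (‖φ‖ + 1)) := by gcongr; exact le_add_of_nonneg_right zero_le_one
    _ = 0 + ε := by rw [zero_add, mul_div_cancel₀ _ (by positivity)]

end CstarSimplicity

section Converse

attribute [local instance] isClosed_redCstar

theorem exists_strongDual_forall_mem_eq_zero_and_ne_zero {E : Type*} [NormedAddCommGroup E]
    [NormedSpace ℂ E] {p : Submodule ℂ E} (hp : IsClosed (p : Set E)) {x : E} (hx : x ∉ p) :
    ∃ f : StrongDual ℂ E, (∀ y ∈ p, f y = 0) ∧ f x ≠ 0 := by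
  have : IsClosed (p : Set E) := hp
  have hmk (y : E) := Submodule.Quotient.mk_eq_zero p (x := y)
  obtain ⟨f, hf⟩ := SeparatingDual.exists_ne_zero (R := ℂ) (mt (hmk x).1 hx)
  exact ⟨f.comp p.mkQL, fun y hy => by simp [(hmk y).2 hy], by simpa using hf⟩

theorem traceState_star_mul_self (a : redCstar G) :
    traceState G (star a * a) = ((‖(a : OpL2 G) (stdBasis G 1)‖ : ℂ)) ^ 2 := by
  change inner ℂ (stdBasis G 1) ((star (a : OpL2 G) * (a : OpL2 G)) (stdBasis G 1)) = _
  rw [mul_apply_eq_comp, ContinuousLinearMap.star_eq_adjoint,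
    ContinuousLinearMap.adjoint_inner_right]
  exact inner_self_eq_norm_sq_to_K _

theorem eq_zero_of_traceState_star_mul_self_eq_zero {a : redCstar G}
    (ha : traceState G (star a * a) = 0) : a = 0 := by
  have hbasis (g : G) : (a : OpL2 G) (stdBasis G g) = 0 := by
    have hconj : redAut G g⁻¹ (star a * a) = star (a * uu g) * (a * uu g) := by
      have hstar : star (uu g) = uu g⁻¹ :=
        Subtype.ext (by rw [StarMemClass.coe_star, coe_uu, star_permRep, coe_uu])
      rw [redAut_apply, inv_inv, star_mul, hstar]
      simp only [mul_assoc]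
    have hnorm := traceState_redAut g⁻¹ (star a * a)
    rw [hconj, ha, traceState_star_mul_self, sq_eq_zero_iff, Complex.ofReal_eq_zero,
      norm_eq_zero] at hnorm
    have hcoe : ((a * uu g : redCstar G) : OpL2 G) (stdBasis G 1) =
        (a : OpL2 G) ((uu g : OpL2 G) (stdBasis G 1)) := rfl
    rwa [hcoe, coe_uu, permRep_stdBasis, smul_eq_mul, mul_one] at hnorm
  exact Subtype.ext <| ContinuousLinearMap.ext_on
    (Submodule.dense_iff_topologicalClosure_eq_top.2 (stdBasis G).dense_span)
    (Set.forall_mem_range.2 hbasis)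

theorem closure_convexHull_conj_subset {I : TwoSidedIdeal (redCstar G)}
    (hI : IsClosed (I : Set (redCstar G))) {a : redCstar G} (ha : a ∈ I) :
    closure (convexHull ℝ {b : redCstar G | ∃ g : G, b = uu g * a * uu g⁻¹}) ⊆ I := by
  refine closure_minimal (convexHull_min ?_ ?_) hI
  · rintro _ ⟨g, rfl⟩
    exact I.mul_mem_right _ _ (I.mul_mem_left _ _ ha)
  · exact ((I.asIdeal.restrictScalars ℂ).restrictScalars ℝ).convex

theorem isCstarSimple_of_forall_sInf_norm_eq_zero
    (h : ∀ (φ : redCstar G →L[ℂ] ℂ) (a : redCstar G),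
      sInf ((fun b => ‖φ b - φ 1 * tauF G a‖) ''
        closure (convexHull ℝ {b : redCstar G | ∃ g : G, b = uu g * a * uu g⁻¹})) = 0) :
    IsCstarSimple G := by
  intro I hI
  by_contra! hI'
  obtain ⟨hbot, htop⟩ := hI'
  have hone : (1 : redCstar G) ∉ I.asIdeal.restrictScalars ℂ := mt I.one_mem_iff.1 htop
  obtain ⟨x, hxI, hx⟩ : ∃ x ∈ I, x ≠ 0 := by
    by_contra! hzero
    exact hbot (eq_bot_iff.2 fun x hx => hzero x hx)
  obtain ⟨φ, hφI, hφ⟩ := exists_strongDual_forall_mem_eq_zero_and_ne_zero hI hone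
  have hτ : tauF G (star x * x) ≠ 0 := by
    rw [← traceState_apply]
    exact mt eq_zero_of_traceState_star_mul_self_eq_zero hx
  let K := closure (convexHull ℝ {b : redCstar G | ∃ g : G, b = uu g * (star x * x) * uu g⁻¹})
  have hK : K.Nonempty := ⟨_, subset_closure (subset_convexHull ℝ _ ⟨1, rfl⟩)⟩
  have hφK : ∀ b ∈ K, ‖φ b - φ 1 * tauF G (star x * x)‖ = ‖φ 1 * tauF G (star x * x)‖ :=
    fun b hb => by
      rw [hφI b (closure_convexHull_conj_subset hI (I.mul_mem_left _ _ hxI) hb), zero_sub, norm_neg]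
  have hval := h φ (star x * x)
  rw [Set.image_congr hφK, hK.image_const, csInf_singleton, norm_eq_zero] at hval
  exact mul_ne_zero hφ hτ hval

end Converse

/-- A discrete group is C*-simple if and only if for every bounded linear functional `φ` on
`C*_λ(G)` and every `a ∈ C*_λ(G)`, the infimum of `|φ(b) - φ(1)τ_λ(a)|` over the norm closed
convex hull `K` of the conjugates of `a` is `0`. -/
theorem cstarSimple_iff_weak_averaging (G : Type u) [Group G] :
    IsCstarSimple G ↔
      ∀ (φ : redCstar G →L[ℂ] ℂ) (a : redCstar G),
        sInf ((fun b => ‖φ b - φ 1 * tauF G a‖) ''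
          closure (convexHull ℝ {b : redCstar G | ∃ g : G, b = uu g * a * uu g⁻¹})) = 0 :=
  ⟨fun hs φ a => hs.sInf_norm_eq_zero φ a, isCstarSimple_of_forall_sInf_norm_eq_zero⟩
end
end

section
/- Let G be a discrete group with an amenable recurrent subgroup H, and let X be a G-boundary. Then the action of G on X is not free: there exist x ∈ X and g ∈ G ∖ {e} with gx = x. -/
noncomputable section
open scoped ENNReal ComplexOrder
open MeasureTheory
set_option maxHeartbeats 1000000
set_option synthInstance.maxHeartbeats 1000000

universe u

variable {G : Type u} [Group G]

/-- Left translation of a bounded function on a group `H`. -/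
def translInfty {H : Type*} [Group H] (h : H) (f : lp (fun _ : H => ℝ) ∞) :
    lp (fun _ : H => ℝ) ∞ :=
  ⟨fun k => f (h⁻¹ * k), by
    apply memℓp_infty
    have : (Set.range fun k => ‖f (h⁻¹ * k)‖) = Set.range fun k => ‖f k‖ :=
      (Equiv.mulLeft h⁻¹).surjective.range_comp (fun k => ‖f k‖)
    rw [this]
    exact memℓp_infty_iff.1 (lp.memℓp f)⟩

/-- A group `H` is amenable: there exists a left-invariant mean on `ℓ∞(H)`, i.e. a unital
positive linear functional invariant under left translation. -/
def IsAmenable (H : Type*) [Group H] : Prop :=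
  ∃ m : lp (fun _ : H => ℝ) ∞ →ₗ[ℝ] ℝ,
    m 1 = 1 ∧ (∀ f : lp (fun _ : H => ℝ) ∞, (∀ k, 0 ≤ f k) → 0 ≤ m f) ∧
      ∀ (h : H) (f : lp (fun _ : H => ℝ) ∞), m (translInfty h f) = m f

/-- `X` is a `G`-boundary: a nonempty compact Hausdorff `G`-space such that for every regular
Borel probability measure `μ` on `X` and every `x ∈ X`, the point mass `δ_x` lies in the
weak* closure of the orbit `Gμ`. -/
def IsBoundary (G X : Type*) [Group G] [TopologicalSpace X] [CompactSpace X] [T2Space X]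
    [MulAction G X] [ContinuousConstSMul G X] : Prop :=
  Nonempty X ∧
  letI : MeasurableSpace X := borel X
  haveI : BorelSpace X := ⟨rfl⟩
  ∀ (μ : ProbabilityMeasure X) (x : X),
    (⟨Measure.dirac x, Measure.dirac.isProbabilityMeasure⟩ : ProbabilityMeasure X) ∈
      closure {ν : ProbabilityMeasure X |
        ∃ g : G, ν = μ.map ((continuous_const_smul g).measurable.aemeasurable (μ := μ.toMeasure))
          (f := (g • ·))}

/-!
An invariant mean on the amenable subgroup `H`, pulled back along an orbit map, gives an
`H`-invariant probability measure `μ` on `X` by the Riesz–Markov–Kakutani theorem. By recurrence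
there is a finite set `F ⊆ G ∖ {1}` meeting every conjugate of `H`. Since `gHg⁻¹` preserves `gμ`,
every translate of `μ` is invariant under some element of `F`; being invariant under some element of
the finite set `F` is a closed condition, so it passes to the point masses in the closure of the
orbit, and a point mass `δ_x` is invariant under `t` only if `t` fixes `x`.
-/

open scoped Topology

theorem exists_finset_forall_mem_of_mem_nhds_bot {s : Set (Subgroup G)}
    (hs : s ∈ 𝓝 (⊥ : Subgroup G)) :
    ∃ F : Finset G, 1 ∉ F ∧ ∀ K : Subgroup G, (∀ t ∈ F, t ∉ K) → K ∈ s := by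
  classical
  obtain ⟨_, hVs, ⟨V, hV, rfl⟩, hbot⟩ := mem_nhds_iff.1 hs
  obtain ⟨I, w, hw, hIV⟩ := isOpen_pi_iff.1 hV _ hbot
  refine ⟨I.erase 1, I.notMem_erase 1, fun K hK => hVs (hIV fun i hi => ?_)⟩
  have mem_iff_mem_bot : i ∈ K ↔ i ∈ (⊥ : Subgroup G) := by
    rw [Subgroup.mem_bot]
    refine ⟨fun hiK => ?_, fun h => h ▸ K.one_mem⟩
    by_contra hi1
    exact hK i (Finset.mem_erase.2 ⟨hi1, hi⟩) hiK
  simpa only [mem_iff_mem_bot] using (hw i hi).2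

theorem IsRecurrent.exists_finset_forall_mem_conjSub {H : Subgroup G} (hR : IsRecurrent H) :
    ∃ F : Finset G, 1 ∉ F ∧ ∀ g : G, ∃ t ∈ F, t ∈ conjSub g H := by
  obtain ⟨F, hF1, hF⟩ :=
    exists_finset_forall_mem_of_mem_nhds_bot (isClosed_closure.compl_mem_nhds hR)
  refine ⟨F, hF1, fun g => ?_⟩
  by_contra! hg
  exact hF (conjSub g H) hg (subset_closure ⟨g, rfl⟩)

/-- Restriction of continuous functions on a compact space `X` along a family `φ` of points of `X`,
as a linear map into the bounded functions on the index set. For an orbit map `φ` it transports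
means on a group to means on `C(X, ℝ)`. -/
def pullbackInfty {ι X : Type*} [TopologicalSpace X] [CompactSpace X] (φ : ι → X) :
    C(X, ℝ) →ₗ[ℝ] lp (fun _ : ι => ℝ) ∞ where
  toFun f := ⟨fun i => f (φ i), memℓp_infty ⟨‖f‖, by
    rintro _ ⟨i, rfl⟩
    exact f.norm_coe_le_norm (φ i)⟩⟩
  map_add' _ _ := rfl
  map_smul' _ _ := rfl

theorem exists_probabilityMeasure_integral_eq {X : Type*} [TopologicalSpace X] [CompactSpace X]
    [T2Space X] [MeasurableSpace X] [BorelSpace X] (Λ : C(X, ℝ) →ₚ[ℝ] ℝ) (hΛ : Λ 1 = 1) :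
    ∃ μ : ProbabilityMeasure X, ∀ f : C(X, ℝ), ∫ x, f x ∂(μ : Measure X) = Λ f := by
  let Λc : CompactlySupportedContinuousMap X ℝ →ₚ[ℝ] ℝ :=
    PositiveLinearMap.mk₀
      { toFun := fun f => Λ f.toContinuousMap
        map_add' := fun f g => map_add Λ f.toContinuousMap g.toContinuousMap
        map_smul' := fun c f => map_smul Λ c f.toContinuousMap }
      fun _ hf => map_nonneg Λ hf
  let μ := RealRMK.rieszMeasure Λc
  have integral_eq (f : C(X, ℝ)) : ∫ x, f x ∂μ = Λ f :=
    RealRMK.integral_rieszMeasure Λc (CompactlySupportedContinuousMap.continuousMapEquiv f)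
  have measure_univ_eq_one : μ.real Set.univ = 1 := by
    simpa [hΛ] using integral_eq 1
  exact ⟨⟨μ, ⟨(ENNReal.toReal_eq_one_iff _).1 measure_univ_eq_one⟩⟩, integral_eq⟩

/-- The measure `μ` is invariant under `s` as far as integrals of continuous functions can tell.
Unlike equality of `μ` with its pushforward, this is a weak* closed condition also on Borel measures
that are not regular. -/
def IsWeaklyInvariant {S X : Type*} [SMul S X] [TopologicalSpace X] [MeasurableSpace X]
    (s : S) (μ : Measure X) : Prop :=
  ∀ f : C(X, ℝ), ∫ x, f (s • x) ∂μ = ∫ x, f x ∂μ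

section WeaklyInvariant

variable {X : Type*} [TopologicalSpace X] [MeasurableSpace X]

theorem isClosed_setOf_isWeaklyInvariant {S : Type*} [SMul S X] [ContinuousConstSMul S X]
    [CompactSpace X] [OpensMeasurableSpace X] (s : S) :
    IsClosed {ν : ProbabilityMeasure X | IsWeaklyInvariant s (ν : Measure X)} := by
  have continuous_integral (f : C(X, ℝ)) :
      Continuous fun ν : ProbabilityMeasure X => ∫ x, f x ∂(ν : Measure X) :=
    ProbabilityMeasure.continuous_integral_boundedContinuousFunction
      (BoundedContinuousFunction.mkOfCompact f)
  simp only [IsWeaklyInvariant, Set.ofPred_forall]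
  exact isClosed_iInter fun f =>
    isClosed_eq (continuous_integral (f.comp ⟨(s • ·), continuous_const_smul s⟩))
      (continuous_integral f)

theorem IsWeaklyInvariant.map_conj [MulAction G X] [ContinuousConstSMul G X] [BorelSpace X]
    {h : G} {μ : Measure X} (hμ : IsWeaklyInvariant h μ) (g : G) :
    IsWeaklyInvariant (g * h * g⁻¹) (μ.map (g • ·)) := by
  intro f
  have integral_map_smul (φ : C(X, ℝ)) : ∫ x, φ x ∂(μ.map (g • ·)) = ∫ x, φ (g • x) ∂μ :=
    integral_map (continuous_const_smul g).aemeasurable φ.continuous.aestronglyMeasurable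
  calc ∫ x, f ((g * h * g⁻¹) • x) ∂(μ.map (g • ·))
      = ∫ x, f ((g * h * g⁻¹) • g • x) ∂μ :=
        integral_map_smul (f.comp ⟨((g * h * g⁻¹) • ·), continuous_const_smul _⟩)
    _ = ∫ x, f (g • h • x) ∂μ := by simp only [mul_smul, inv_smul_smul]
    _ = ∫ x, f (g • x) ∂μ := hμ (f.comp ⟨(g • ·), continuous_const_smul g⟩)
    _ = ∫ x, f x ∂(μ.map (g • ·)) := (integral_map_smul f).symm

theorem isWeaklyInvariant_dirac_iff {S : Type*} [SMul S X] [T35Space X] [OpensMeasurableSpace X]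
    {s : S} {x : X} : IsWeaklyInvariant s (Measure.dirac x) ↔ s • x = x := by
  simp only [IsWeaklyInvariant, integral_dirac]
  refine ⟨fun h => ?_, fun h f => by rw [h]⟩
  by_contra hne
  obtain ⟨f, hf, hfne⟩ := separatesPoints_continuous_of_t35Space hne
  exact hfne (h ⟨f, hf⟩)

theorem IsAmenable.exists_isWeaklyInvariant {H : Type*} [Group H] (hA : IsAmenable H)
    [CompactSpace X] [T2Space X] [BorelSpace X] [Nonempty X] [MulAction H X]
    [ContinuousConstSMul H X] :
    ∃ μ : ProbabilityMeasure X, ∀ h : H, IsWeaklyInvariant h (μ : Measure X) := by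
  obtain ⟨m, m_one, m_nonneg, m_transl⟩ := hA
  obtain ⟨x⟩ := ‹Nonempty X›
  let res := pullbackInfty fun k : H => k • x
  let Λ : C(X, ℝ) →ₚ[ℝ] ℝ :=
    PositiveLinearMap.mk₀ (m ∘ₗ res) fun _ hf => m_nonneg _ fun k => hf (k • x)
  obtain ⟨μ, hμ⟩ := exists_probabilityMeasure_integral_eq Λ m_one
  refine ⟨μ, fun h f => ?_⟩
  let fh : C(X, ℝ) := f.comp ⟨(h • ·), continuous_const_smul h⟩
  have res_translate : res fh = translInfty h⁻¹ (res f) := by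
    ext k
    change f (h • k • x) = f ((h⁻¹⁻¹ * k) • x)
    rw [inv_inv, mul_smul]
  calc ∫ y, f (h • y) ∂(μ : Measure X)
      = m (res fh) := hμ fh
    _ = m (res f) := by rw [res_translate, m_transl]
    _ = ∫ y, f y ∂(μ : Measure X) := (hμ f).symm

theorem IsBoundary.diracProba_mem_of_isClosed [CompactSpace X] [T2Space X] [BorelSpace X]
    [MulAction G X] [ContinuousConstSMul G X] (hX : IsBoundary G X)
    {C : Set (ProbabilityMeasure X)} (hC : IsClosed C) {μ : ProbabilityMeasure X}
    (hμ : ∀ g : G, μ.map (continuous_const_smul g).aemeasurable ∈ C) (x : X) :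
    diracProba x ∈ C := by
  obtain rfl := BorelSpace.measurable_eq (α := X)
  refine closure_minimal ?_ hC (hX.2 μ x)
  rintro _ ⟨g, rfl⟩
  exact hμ g

theorem IsBoundary.exists_ne_one_smul_eq [CompactSpace X] [T2Space X] [BorelSpace X]
    [MulAction G X] [ContinuousConstSMul G X] (hX : IsBoundary G X) {H : Subgroup G}
    (hR : IsRecurrent H) {μ : ProbabilityMeasure X}
    (hμ : ∀ h ∈ H, IsWeaklyInvariant h (μ : Measure X)) (x : X) :
    ∃ g : G, g ≠ 1 ∧ g • x = x := by
  obtain ⟨F, hF1, hF⟩ := hR.exists_finset_forall_mem_conjSub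
  let invariantUnderF : Set (ProbabilityMeasure X) :=
    ⋃ t ∈ F, {ν | IsWeaklyInvariant t (ν : Measure X)}
  have isClosed_invariantUnderF : IsClosed invariantUnderF :=
    F.finite_toSet.isClosed_biUnion fun t _ => isClosed_setOf_isWeaklyInvariant t
  have dirac_mem : diracProba x ∈ invariantUnderF := by
    refine hX.diracProba_mem_of_isClosed (μ := μ) isClosed_invariantUnderF (fun g => ?_) x
    obtain ⟨_, htF, h, hH, rfl⟩ := hF g
    exact Set.mem_biUnion htF ((hμ h hH).map_conj g)
  obtain ⟨t, htF, ht⟩ := Set.mem_iUnion₂.1 dirac_mem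
  exact ⟨t, ne_of_mem_of_not_mem htF hF1, isWeaklyInvariant_dirac_iff.1 ht⟩

end WeaklyInvariant

/-- If a discrete group `G` has an amenable recurrent subgroup, then no `G`-boundary has a
free `G`-action. -/
theorem boundary_action_not_free_of_amenable_recurrent
    (G : Type u) [Group G] (H : Subgroup G) (hA : IsAmenable H) (hR : IsRecurrent H)
    (X : Type*) [TopologicalSpace X] [CompactSpace X] [T2Space X]
    [MulAction G X] [ContinuousConstSMul G X] (hX : IsBoundary G X) :
    ∃ (x : X) (g : G), g ≠ 1 ∧ g • x = x := by
  borelize X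
  have : Nonempty X := hX.1
  have : ContinuousConstSMul H X := ⟨fun h => continuous_const_smul (h : G)⟩
  obtain ⟨μ, hμ⟩ := hA.exists_isWeaklyInvariant (X := X)
  exact ⟨Classical.arbitrary X, hX.exists_ne_one_smul_eq hR (fun h hh => hμ ⟨h, hh⟩) _⟩
end
end
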